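/- Assume char k = 0 and the setting of η with m ≥ 1. Let k', l be integers with 1 ≤ k' < l ≤ min(2k', m), and let t ∈ Std_η(η_l) be a standard tableau with deg t = 2k' − l. Then, for a suitable choice of reduced expressions, the element ψ_{t, t^{η_l}_η} lies in the left ideal U^η_j · B_n^κ for some index j. -/

import Mathlib

/-!
A tableau is encoded by its column word; one in `Std_η(μ)` has the word `0^c` followed by `m` blocks
of `e` equal letters (`init_zero`, `blocks`), so its path is a lattice path on the walls.

*Combinatorics.* If no turning point `α^e β^e` of that path lies strictly outside the fundamental
alcove and points away from the origin, the path zigzags through the alcove and then leaves it for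
good (`zigzag`). For shape `η_l`, whose weight is computed in `singList_spec`, there are at least
`l - 1` crossings, so the degree is at least `l - 1`. Since `2k' - l < l - 1`, the tableau `t` has
a turning point pointing away from the origin, given by blocks `i` and `i + 1` (`exists_peak`).

*Factorisation.* Two distinct descents of a column word are never adjacent, so `ψ_{d_t} e(i^λ)`,
written `Vel`, does not depend on the sequence of descents used (`Red.psi_unique`). Exchanging two
adjacent letters of the word splits off a factor `ψ_r` whenever it is a descent or the two residues
are distant (`Vel_step`). At the turning point found above every exchange needed is of this kind,
whence `Vel τ = topE * Vel τ'`, where `topE` is the diamond of size `e` without its last row of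
crossings (`move_top`).

*Algebra.* On two equal strings of fewer than `e` residues, a diamond satisfies the relations of a
single nilHecke crossing (`dia_rel`). In the diamond of size `e` the last strand is adjacent to both
ends of the string formed by the other `e - 1` residues, and as a result that diamond acts on
`topE * v` as `±2` (`dia_absorb`). In characteristic zero `2` is invertible, so `Vel τ` lies in the
right ideal generated by the diamond (`absorb`), which is `U^η_{i+1}` (`layered_eq_dia`,
`Ueta_mul`).
-/

/-!
Common setup: a KLR-style presentation of the (doubly critical) blob algebra
`B_n^κ`, together with the combinatorics of one-column bipartitions,
standard tableaux (encoded by their column words), residue sequences, paths,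
walls, degrees, the infinite dihedral group, diamonds, and cellular elements.
-/

noncomputable section

namespace Blob

/-- Generators of the blob algebra presentation: `ψ_r`, `y_r` and the
idempotents `e(i)` for residue sequences `i ∈ Iⁿ`, where `I = ℤ/eℤ`. -/
inductive Gen (n e : ℕ) : Type
  | psi (r : ℕ) : Gen n e
  | y (r : ℕ) : Gen n e
  | idem (i : Fin n → ZMod e) : Gen n e

variable (𝕜 : Type) [Field 𝕜]

/-- The free algebra on the generators. -/
abbrev FA (𝕜 : Type) [Field 𝕜] (n e : ℕ) : Type := FreeAlgebra 𝕜 (Gen n e)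

variable {n e : ℕ}

/-- The generator `ψ_r` in the free algebra. -/
def Ψ (r : ℕ) : FA 𝕜 n e := FreeAlgebra.ι 𝕜 (Gen.psi r)

/-- The generator `y_r` in the free algebra. -/
def Yg (r : ℕ) : FA 𝕜 n e := FreeAlgebra.ι 𝕜 (Gen.y r)

/-- The generator `e(i)` in the free algebra. -/
def Eg (i : Fin n → ZMod e) : FA 𝕜 n e := FreeAlgebra.ι 𝕜 (Gen.idem i)

/-- The entry in (1-based) position `p` of a residue sequence `i ∈ Iⁿ`. -/
def ent (i : Fin n → ZMod e) (p : ℕ) : ZMod e :=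
  if h : p - 1 < n then i ⟨p - 1, h⟩ else 0

/-- `s_r · i`: swap the entries of `i` in (1-based) positions `r` and `r+1`. -/
def swapRes (r : ℕ) (i : Fin n → ZMod e) : Fin n → ZMod e :=
  if h : 1 ≤ r ∧ r < n then i ∘ (Equiv.swap ⟨r - 1, by omega⟩ ⟨r, h.2⟩) else i

/-- The defining relations of the blob algebra `B_n^κ`.
(Out-of-range generators are set to `0`, so the quotient is exactly the
algebra on the generators `ψ_1,…,ψ_{n-1}`, `y_1,…,y_n`, `e(i)`.) -/
inductive blobRel (κ : ZMod e × ZMod e) : FA 𝕜 n e → FA 𝕜 n e → Prop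
  | psi_zero {r : ℕ} (h : ¬(1 ≤ r ∧ r + 1 ≤ n)) : blobRel κ (Ψ 𝕜 r) 0
  | y_zero {r : ℕ} (h : ¬(1 ≤ r ∧ r ≤ n)) : blobRel κ (Yg 𝕜 r) 0
  | idem_mul {i j : Fin n → ZMod e} :
      blobRel κ (Eg 𝕜 i * Eg 𝕜 j) (if i = j then Eg 𝕜 i else 0)
  | idem_sum {s : Finset (Fin n → ZMod e)} (h : ∀ x, x ∈ s) :
      blobRel κ (∑ i ∈ s, Eg 𝕜 i) 1
  | y_idem {r : ℕ} {i : Fin n → ZMod e} :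
      blobRel κ (Yg 𝕜 r * Eg 𝕜 i) (Eg 𝕜 i * Yg 𝕜 r)
  | psi_idem {r : ℕ} {i : Fin n → ZMod e} :
      blobRel κ (Ψ 𝕜 r * Eg 𝕜 i) (Eg 𝕜 (swapRes r i) * Ψ 𝕜 r)
  | y_y {r s : ℕ} : blobRel κ (Yg 𝕜 r * Yg 𝕜 s) (Yg 𝕜 s * Yg 𝕜 r)
  | psi_y {r s : ℕ} (h1 : s ≠ r) (h2 : s ≠ r + 1) :
      blobRel κ (Ψ 𝕜 r * Yg 𝕜 s) (Yg 𝕜 s * Ψ 𝕜 r)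
  | psi_psi {r s : ℕ} (h : r + 1 < s ∨ s + 1 < r) :
      blobRel κ (Ψ 𝕜 r * Ψ 𝕜 s) (Ψ 𝕜 s * Ψ 𝕜 r)
  | psi_y_slide {r : ℕ} {i : Fin n → ZMod e} (h1 : 1 ≤ r) (h2 : r + 1 ≤ n) :
      blobRel κ (Ψ 𝕜 r * Yg 𝕜 (r + 1) * Eg 𝕜 i)
        ((Yg 𝕜 r * Ψ 𝕜 r - if ent i r = ent i (r + 1) then 1 else 0) * Eg 𝕜 i)
  | y_psi_slide {r : ℕ} {i : Fin n → ZMod e} (h1 : 1 ≤ r) (h2 : r + 1 ≤ n) :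
      blobRel κ (Yg 𝕜 (r + 1) * Ψ 𝕜 r * Eg 𝕜 i)
        ((Ψ 𝕜 r * Yg 𝕜 r - if ent i r = ent i (r + 1) then 1 else 0) * Eg 𝕜 i)
  | quad {r : ℕ} {i : Fin n → ZMod e} (h1 : 1 ≤ r) (h2 : r + 1 ≤ n) :
      blobRel κ (Ψ 𝕜 r * Ψ 𝕜 r * Eg 𝕜 i)
        (if ent i (r + 1) = ent i r then 0
         else if ent i (r + 1) = ent i r + 1 then (Yg 𝕜 (r + 1) - Yg 𝕜 r) * Eg 𝕜 i
         else if ent i (r + 1) = ent i r - 1 then (Yg 𝕜 r - Yg 𝕜 (r + 1)) * Eg 𝕜 i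
         else Eg 𝕜 i)
  | braid {r : ℕ} {i : Fin n → ZMod e} (h1 : 1 ≤ r) (h2 : r + 2 ≤ n) :
      blobRel κ (Ψ 𝕜 r * Ψ 𝕜 (r + 1) * Ψ 𝕜 r * Eg 𝕜 i)
        (if ent i (r + 2) = ent i r ∧ ent i r = ent i (r + 1) - 1 then
            (Ψ 𝕜 (r + 1) * Ψ 𝕜 r * Ψ 𝕜 (r + 1) - 1) * Eg 𝕜 i
         else if ent i (r + 2) = ent i r ∧ ent i r = ent i (r + 1) + 1 then
            (Ψ 𝕜 (r + 1) * Ψ 𝕜 r * Ψ 𝕜 (r + 1) + 1) * Eg 𝕜 i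
         else Ψ 𝕜 (r + 1) * Ψ 𝕜 r * Ψ 𝕜 (r + 1) * Eg 𝕜 i)
  | cyclo {i : Fin n → ZMod e} (h : ent i 1 = κ.1 ∨ ent i 1 = κ.2) :
      blobRel κ (Yg 𝕜 1 * Eg 𝕜 i) 0
  | blob {i : Fin n → ZMod e} (h1 : 2 ≤ n) (h2 : ent i 2 = ent i 1 + 1) :
      blobRel κ (Eg 𝕜 i) 0

/-- The blob algebra `B_n^κ`. -/
abbrev BA (𝕜 : Type) [Field 𝕜] (n e : ℕ) (κ : ZMod e × ZMod e) : Type :=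
  RingQuot (blobRel 𝕜 (n := n) κ)

variable (κ : ZMod e × ZMod e)

/-- The generator `ψ_r` of `B_n^κ`. -/
def bpsi (r : ℕ) : BA 𝕜 n e κ := RingQuot.mkAlgHom 𝕜 (blobRel 𝕜 (n := n) κ) (Ψ 𝕜 r)

/-- The generator `y_r` of `B_n^κ`. -/
def bY (r : ℕ) : BA 𝕜 n e κ := RingQuot.mkAlgHom 𝕜 (blobRel 𝕜 (n := n) κ) (Yg 𝕜 r)

/-- The idempotent generator `e(i)` of `B_n^κ`. -/
def bE (i : Fin n → ZMod e) : BA 𝕜 n e κ :=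
  RingQuot.mkAlgHom 𝕜 (blobRel 𝕜 (n := n) κ) (Eg 𝕜 i)

/-- `κ` is an adjacency-free bicharge: `κ₁ ∉ {κ₂, κ₂+1, κ₂-1}`. -/
def AdjFree (κ : ZMod e × ZMod e) : Prop :=
  κ.1 ≠ κ.2 ∧ κ.1 ≠ κ.2 + 1 ∧ κ.1 ≠ κ.2 - 1

/-! ### Combinatorics of one-column bipartitions and standard tableaux -/

/-- A standard tableau of a one-column bipartition of `n`, encoded by its
column word: entry `j+1` (for `j : Fin n`) lies in column `t j` (column `0`
is the first column, column `1` the second).  The shape is recovered from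
the column counts, and standardness is automatic in this encoding. -/
abbrev StdTab (n : ℕ) := Fin n → Fin 2

/-- The (1-based) row in which the `(j+1)`-st entry of `t` sits. -/
def rowOf (t : StdTab n) (j : Fin n) : ℕ :=
  Set.ncard {j' : Fin n | j' ≤ j ∧ t j' = t j}

/-- The residue sequence `i^t` of a standard tableau: the residue of the box
`(r, m)` is `κ_m + 1 - r`. -/
def resOf (κ : ZMod e × ZMod e) (t : StdTab n) : Fin n → ZMod e :=
  fun j => (if t j = 0 then κ.1 else κ.2) + 1 - (rowOf t j : ZMod e)

/-- The classical weight `λ₁ - λ₂` of (the shape of) a standard tableau. -/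
def cwt (t : StdTab n) : ℤ :=
  (Set.ncard {j : Fin n | t j = 0} : ℤ) - (Set.ncard {j : Fin n | t j = 1} : ℤ)

/-- The dominant standard tableau `t^λ` of the shape `λ = (1^{l1}, 1^{n-l1})`:
entries are placed left-to-right along each row, top row to bottom row. -/
def domCol (n l1 : ℕ) : StdTab n := fun p =>
  if (p : ℕ) + 1 ≤ 2 * min l1 (n - l1) then (if ((p : ℕ) + 1) % 2 = 1 then 0 else 1)
  else (if n - l1 ≤ l1 then 0 else 1)

/-- The dominant standard tableau of the shape with classical weight `x`. -/
def domOfWt (n : ℕ) (x : ℤ) : StdTab n := domCol n (((n : ℤ) + x) / 2).toNat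

/-- The path `p_t` associated to a standard tableau. -/
def pathOf (t : StdTab n) (j : ℕ) : ℤ :=
  (Set.ncard {j' : Fin n | (j' : ℕ) < j ∧ t j' = 0} : ℤ)
    - (Set.ncard {j' : Fin n | (j' : ℕ) < j ∧ t j' = 1} : ℤ)

/-- `c`: the smallest positive integer congruent to `κ₁ - κ₂` modulo `e`. -/
def cWall (e : ℕ) (κ : ZMod e × ZMod e) : ℕ :=
  if (κ.1 - κ.2).val = 0 then e else (κ.1 - κ.2).val

/-- The walls are the integers `c + k·e`, `k ∈ ℤ`. -/
def IsWall (c e : ℕ) (x : ℤ) : Prop := ∃ k : ℤ, x = (c : ℤ) + k * (e : ℤ)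

/-- The path of `t` performs a wall-to-wall step starting at time `j`. -/
def WallToWallAt (c e : ℕ) (t : StdTab n) (j : ℕ) : Prop :=
  j + e ≤ n ∧ IsWall c e (pathOf t j) ∧
    ((∀ a < e, pathOf t (j + a + 1) = pathOf t (j + a) + 1) ∨
     (∀ a < e, pathOf t (j + a + 1) = pathOf t (j + a) - 1))

/-- The path of `t` performs a wall-to-wall step across the fundamental alcove
(whose walls are `c - e` and `c`) starting at time `j`. -/
def CrossesFundAt (c e : ℕ) (t : StdTab n) (j : ℕ) : Prop :=
  WallToWallAt c e t j ∧
    ((pathOf t j = (c : ℤ) ∧ pathOf t (j + e) = (c : ℤ) - (e : ℤ)) ∨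
     (pathOf t j = (c : ℤ) - (e : ℤ) ∧ pathOf t (j + e) = (c : ℤ)))

/-- `w(t)`: the number of wall-to-wall steps of `p_t` across the fundamental
alcove. -/
def wNum (c e : ℕ) (t : StdTab n) : ℕ := Set.ncard {j : ℕ | CrossesFundAt c e t j}

/-- The time at which the last wall-to-wall step of `p_t` ends. -/
def lastWW (c e : ℕ) (t : StdTab n) : ℕ :=
  sSup {j' : ℕ | ∃ j, WallToWallAt c e t j ∧ j' = j + e}

/-- `δ(t) = 1` if the first step after all wall-to-wall steps points toward
the origin, and `0` otherwise. -/
def deltaNum (c e : ℕ) (t : StdTab n) : ℕ := by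
  classical
  exact if lastWW c e t + 1 ≤ n ∧
      |pathOf t (lastWW c e t + 1)| < |pathOf t (lastWW c e t)| then 1 else 0

/-- The degree of a standard tableau: `deg t = w(t) + δ(t)`. -/
def degTab (c e : ℕ) (t : StdTab n) : ℕ := wNum c e t + deltaNum c e t

/-- The reflection of `ℤ` about the wall `c + k·e`. -/
def reflWall (c e : ℕ) (k : ℤ) : Equiv.Perm ℤ :=
  Function.Involutive.toPerm (fun x => 2 * ((c : ℤ) + k * (e : ℤ)) - x)
    (fun x => by show 2 * ((c : ℤ) + k * (e : ℤ)) - (2 * ((c : ℤ) + k * (e : ℤ)) - x) = x; ring)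

/-- The infinite dihedral group `W` generated by the reflections about the
walls. -/
def dihedralW (c e : ℕ) : Subgroup (Equiv.Perm ℤ) :=
  Subgroup.closure {g | ∃ k : ℤ, g = reflWall c e k}

/-- Two (classical) weights are linked if they lie in the same `W`-orbit. -/
def Linked (c e : ℕ) (x y : ℤ) : Prop := ∃ g ∈ dihedralW c e, g x = y

/-- A weight is regular if it is not a wall. -/
def Regular (c e : ℕ) (x : ℤ) : Prop := ¬ IsWall c e x

/-- `ℓ(w_λ)`: the number of walls strictly between the weight `x` and the
fundamental alcove (the alcove of integers strictly between `c - e` and `c`). -/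
def ellW (c e : ℕ) (x : ℤ) : ℕ :=
  Set.ncard {w : ℤ | IsWall c e w ∧
    (((c : ℤ) - 1 < w ∧ w < x) ∨ (x < w ∧ w < (c : ℤ) - (e : ℤ) + 1))}

/-- The labelling `λ₀, λ₁, λ₂, …` of the linkage class of a singular weight
`x0` (as a list of the first `k+1` weights): for `x0 ≥ 0` and `k` even, the
next weight `λ_{k+1}` is the linked weight in `Λ(n)`, distinct from the
previous ones, with largest classical weight, and for `k` odd the one with
the smallest classical weight; for `x0 < 0` largest/smallest are swapped. -/
def singList (c e n : ℕ) (x0 : ℤ) : ℕ → List ℤ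
  | 0 => [x0]
  | k + 1 =>
      let L := singList c e n x0 k
      let S : Set ℤ := {y | Linked c e x0 y ∧ -(n : ℤ) ≤ y ∧ y ≤ (n : ℤ) ∧ y ∉ L}
      L ++ [if 0 ≤ x0 then (if k % 2 = 0 then sSup S else sInf S)
            else (if k % 2 = 0 then sInf S else sSup S)]

/-- The classical weight of `λ_k` in the singular labelling starting at `x0`. -/
def singWt (c e n : ℕ) (x0 : ℤ) (k : ℕ) : ℤ := (singList c e n x0 k).getLastD 0

/-! ### Words, permutations and cellular basis elements -/

/-- `ψ_w` for a word `w = [r₁, …, r_l]`: the product `ψ_{r₁} ⋯ ψ_{r_l}`. -/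
def psiWord (w : List ℕ) : BA 𝕜 n e κ := (w.map (bpsi 𝕜 κ)).prod

/-- The cellular element `ψ_{s,t} = ψ_{d_s} · e(i) · (ψ_{d_t})⁻` built from
reduced words `ws`, `wt` for `d_s`, `d_t` (the anti-involution fixes the
`ψ`-generators and reverses products, so `(ψ_{d_t})⁻ = ψ_{reverse wt}`). -/
def cellElt (ws wt : List ℕ) (i : Fin n → ZMod e) : BA 𝕜 n e κ :=
  psiWord 𝕜 κ ws * bE 𝕜 κ i * psiWord 𝕜 κ wt.reverse

/-- The simple transposition `s_r = (r, r+1)` (1-based) as a permutation of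
`Fin n`. -/
def sPerm (n : ℕ) (r : ℕ) : Equiv.Perm (Fin n) :=
  if h : 1 ≤ r ∧ r < n then Equiv.swap ⟨r - 1, by omega⟩ ⟨r, h.2⟩ else 1

/-- The permutation `s_{r₁} ⋯ s_{r_l}` of a word `[r₁, …, r_l]`. -/
def permOfWord (n : ℕ) (w : List ℕ) : Equiv.Perm (Fin n) := (w.map (sPerm n)).prod

/-- `w` is a reduced expression for the permutation `d`. -/
def IsReducedWord (n : ℕ) (d : Equiv.Perm (Fin n)) (w : List ℕ) : Prop :=
  (∀ r ∈ w, 1 ≤ r ∧ r < n) ∧ permOfWord n w = d ∧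
    ∀ w' : List ℕ, (∀ r ∈ w', 1 ≤ r ∧ r < n) → permOfWord n w' = d →
      w.length ≤ w'.length

/-- `d = d_t` is the permutation with `d_t · t^λ = t`, where `tdom = t^λ`:
the entry `d(p)` of `t` occupies the same box as the entry `p` of `tdom`. -/
def IsDTabPerm (tdom t : StdTab n) (d : Equiv.Perm (Fin n)) : Prop :=
  ∀ p : Fin n, t (d p) = tdom p ∧ rowOf t (d p) = rowOf tdom p

/-- `w` is a reduced expression for `d_t` (relative to the dominant tableau
`tdom` of the same shape). -/
def IsRedWordForTab (tdom t : StdTab n) (w : List ℕ) : Prop :=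
  ∃ d : Equiv.Perm (Fin n), IsDTabPerm tdom t d ∧ IsReducedWord n d w

/-- `t ∈ Std_λ(μ)`: `t` is a standard tableau of the shape with classical
weight `xm` whose residue sequence is `i^λ`, where `λ` has classical weight
`xl`. -/
def MemStd (κ : ZMod e × ZMod e) (xl xm : ℤ) (t : StdTab n) : Prop :=
  cwt t = xm ∧ resOf κ t = resOf κ (domOfWt n xl)

/-- `t` is a tableau of maximal degree in `Std_λ(μ)`. -/
def IsMaxTab (κ : ZMod e × ZMod e) (xl xm : ℤ) (t : StdTab n) : Prop :=
  MemStd κ xl xm t ∧ ∀ s : StdTab n, MemStd κ xl xm s →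
    degTab (cWall e κ) e s ≤ degTab (cWall e κ) e t

/-! ### Diamonds -/

/-- One layer of a diamond: `ψ_{f-a} ψ_{f-a+2} ⋯ ψ_{f+a}`. -/
def layerElt (f a : ℕ) : BA 𝕜 n e κ :=
  ((List.range (a + 1)).map (fun b => bpsi 𝕜 κ (f - a + 2 * b))).prod

/-- The diamond centred at position `f` with bottom idempotent `e(i)`:
layers of `1, 2, …, e, …, 2, 1` `ψ`-generators centred at `f`. -/
def diamondAt (f : ℕ) (i : Fin n → ZMod e) : BA 𝕜 n e κ :=
  ((List.range e).map (layerElt 𝕜 κ f)).prod *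
    ((List.range (e - 1)).reverse.map (layerElt 𝕜 κ f)).prod * bE 𝕜 κ i

/-- The smallest positive integer congruent to `a` modulo `e`. -/
def posRep (e : ℕ) (a : ℤ) : ℕ :=
  if (a % (e : ℤ)).toNat = 0 then e else (a % (e : ℤ)).toNat

/-- `f_λ` for the weight `λ = (1^{l1}, 1^{l2})`. -/
def fWt (c e : ℕ) (l1 l2 : ℕ) : ℕ :=
  if l2 ≤ l1 then posRep e (2 * (l2 : ℤ) + (c : ℤ)) else posRep e (2 * (l1 : ℤ) - (c : ℤ))

/-- The diamond `U^λ_j` of the weight `λ = (1^{l1}, 1^{l2})` (with `l1+l2 = n`). -/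
def diamondU (𝕜 : Type) [Field 𝕜] {e : ℕ} (κ : ZMod e × ZMod e) (n l1 l2 j : ℕ) :
    BA 𝕜 n e κ :=
  diamondAt 𝕜 κ (fWt (cWall e κ) e l1 l2 + j * e) (resOf κ (domCol n l1))

/-! ### The setting of `η` -/

/-- The classical weight of `η_k` (in the setting `η = (1ⁿ, ∅)`, `n ≡ c (mod e)`). -/
def etaWt (c e n : ℕ) (k : ℕ) : ℤ := singWt c e n (n : ℤ) k

/-- The residue sequence `i^{η_k}`. -/
def etaRes {e : ℕ} (κ : ZMod e × ZMod e) (n k : ℕ) : Fin n → ZMod e :=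
  resOf κ (domOfWt n (etaWt (cWall e κ) e n k))

/-- The diamond `U^η_j`, centred at position `f_η + j·e = c + j·e`. -/
def Ueta (𝕜 : Type) [Field 𝕜] {e : ℕ} (κ : ZMod e × ZMod e) (n j : ℕ) : BA 𝕜 n e κ :=
  diamondAt 𝕜 κ (cWall e κ + j * e) (etaRes κ n 0)

/-- `U^η_{r,s} = U^η_r U^η_{r+1} ⋯ U^η_s`. -/
def UetaSeq (𝕜 : Type) [Field 𝕜] {e : ℕ} (κ : ZMod e × ZMod e) (n r s : ℕ) :
    BA 𝕜 n e κ :=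
  ((List.range (s + 1 - r)).map (fun a => Ueta 𝕜 κ n (r + a))).prod

end Blob

namespace Blob

/-! ### Relations of the algebra, applied to weight vectors -/

section Algebra

variable {𝕜 : Type} [Field 𝕜] {n e : ℕ} {κ : ZMod e × ZMod e}

/-- The residue sequence `(ω 1, …, ω n)` of an `ℕ`-indexed family of residues. -/
def seqOf (n : ℕ) (ω : ℕ → ZMod e) : Fin n → ZMod e := fun p => ω (p + 1)

/-- `v` is a weight vector of weight `ω`: it is fixed by left multiplication by `e(ω 1, …, ω n)`. -/
def Wt (ω : ℕ → ZMod e) (v : BA 𝕜 n e κ) : Prop := bE 𝕜 κ (seqOf n ω) * v = v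

lemma rel_eq {a b : FA 𝕜 n e} (h : blobRel 𝕜 (n := n) κ a b) :
    RingQuot.mkAlgHom 𝕜 (blobRel 𝕜 (n := n) κ) a = RingQuot.mkAlgHom 𝕜 (blobRel 𝕜 κ) b :=
  RingQuot.mkAlgHom_rel 𝕜 h

lemma psi_comm {r s : ℕ} (h : r + 1 < s ∨ s + 1 < r) :
    (bpsi 𝕜 κ r * bpsi 𝕜 κ s : BA 𝕜 n e κ) = bpsi 𝕜 κ s * bpsi 𝕜 κ r := by
  simpa [bpsi] using rel_eq (𝕜 := 𝕜) (n := n) (κ := κ) (blobRel.psi_psi h)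

lemma psi_y_comm {r s : ℕ} (h1 : s ≠ r) (h2 : s ≠ r + 1) :
    (bpsi 𝕜 κ r * bY 𝕜 κ s : BA 𝕜 n e κ) = bY 𝕜 κ s * bpsi 𝕜 κ r := by
  simpa [bpsi, bY] using rel_eq (𝕜 := 𝕜) (n := n) (κ := κ) (blobRel.psi_y h1 h2)

lemma y_comm {r s : ℕ} :
    (bY 𝕜 κ r * bY 𝕜 κ s : BA 𝕜 n e κ) = bY 𝕜 κ s * bY 𝕜 κ r := by
  simpa [bY] using rel_eq (𝕜 := 𝕜) (n := n) (κ := κ) (blobRel.y_y (r := r) (s := s))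

lemma psi_bE {r : ℕ} {i : Fin n → ZMod e} :
    (bpsi 𝕜 κ r * bE 𝕜 κ i : BA 𝕜 n e κ) = bE 𝕜 κ (swapRes r i) * bpsi 𝕜 κ r := by
  simpa [bpsi, bE] using rel_eq (𝕜 := 𝕜) (n := n) (κ := κ) (blobRel.psi_idem (r := r) (i := i))

lemma y_bE {r : ℕ} {i : Fin n → ZMod e} :
    (bY 𝕜 κ r * bE 𝕜 κ i : BA 𝕜 n e κ) = bE 𝕜 κ i * bY 𝕜 κ r := by
  simpa [bY, bE] using rel_eq (𝕜 := 𝕜) (n := n) (κ := κ) (blobRel.y_idem (r := r) (i := i))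

lemma bE_idem {i : Fin n → ZMod e} :
    (bE 𝕜 κ i * bE 𝕜 κ i : BA 𝕜 n e κ) = bE 𝕜 κ i := by
  simpa [bE] using rel_eq (𝕜 := 𝕜) (n := n) (κ := κ) (blobRel.idem_mul (i := i) (j := i))

lemma ent_seqOf {ω : ℕ → ZMod e} {p : ℕ} (h1 : 1 ≤ p) (h2 : p ≤ n) :
    ent (seqOf n ω) p = ω p := by
  have h : p - 1 < n := by omega
  simp [ent, seqOf, h, Nat.sub_add_cancel h1]

lemma seqOf_ent (i : Fin n → ZMod e) : seqOf n (ent i) = i := by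
  funext p
  simp [seqOf, ent]

lemma swapRes_seqOf {ω : ℕ → ZMod e} {r : ℕ} (h1 : 1 ≤ r) (h2 : r + 1 ≤ n) :
    swapRes r (seqOf n ω) = seqOf n (ω ∘ Equiv.swap r (r + 1)) := by
  have h : 1 ≤ r ∧ r < n := ⟨h1, h2⟩
  funext p
  simp only [swapRes, h, and_self, dif_pos, Function.comp, seqOf, Equiv.swap_apply_def, Fin.ext_iff]
  split_ifs <;> first | omega | (simp; try congr 1; try omega)

lemma Wt.psi {ω : ℕ → ZMod e} {v : BA 𝕜 n e κ} (hv : Wt ω v) {r : ℕ} (h1 : 1 ≤ r)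
    (h2 : r + 1 ≤ n) : Wt (ω ∘ Equiv.swap r (r + 1)) (bpsi 𝕜 κ r * v) := by
  unfold Wt at *
  rw [← swapRes_seqOf h1 h2, ← mul_assoc, ← psi_bE, mul_assoc, hv]

lemma Wt.y {ω : ℕ → ZMod e} {v : BA 𝕜 n e κ} (hv : Wt ω v) (r : ℕ) :
    Wt ω (bY 𝕜 κ r * v) := by
  unfold Wt at *
  rw [← mul_assoc, ← y_bE, mul_assoc, hv]

lemma Wt.sub {ω : ℕ → ZMod e} {v v' : BA 𝕜 n e κ} (hv : Wt ω v) (hv' : Wt ω v') :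
    Wt ω (v - v') := by
  unfold Wt at *
  rw [mul_sub, hv, hv']

variable {ω : ℕ → ZMod e} {v : BA 𝕜 n e κ} {r : ℕ}

lemma quad_gen (hv : Wt ω v) (h1 : 1 ≤ r) (h2 : r + 1 ≤ n) :
    bpsi 𝕜 κ r * (bpsi 𝕜 κ r * v) =
      if ω (r + 1) = ω r then 0
      else if ω (r + 1) = ω r + 1 then (bY 𝕜 κ (r + 1) - bY 𝕜 κ r) * v
      else if ω (r + 1) = ω r - 1 then (bY 𝕜 κ r - bY 𝕜 κ (r + 1)) * v
      else v := by
  have h := rel_eq (𝕜 := 𝕜) (n := n) (κ := κ) (blobRel.quad (i := seqOf n ω) h1 h2)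
  rw [ent_seqOf h1 (by omega), ent_seqOf (by omega) h2] at h
  unfold Wt at hv
  have h' := congrArg (· * v) h
  simp only [map_mul] at h'
  have e1 : RingQuot.mkAlgHom 𝕜 (blobRel 𝕜 (n := n) κ) (Eg 𝕜 (seqOf n ω)) * v = v := hv
  rw [mul_assoc, e1, mul_assoc] at h'
  refine h'.trans ?_
  split_ifs
  · simp
  · rw [map_mul, mul_assoc, e1, map_sub]; rfl
  · rw [map_mul, mul_assoc, e1, map_sub]; rfl
  · exact e1

lemma slide_gen (hv : Wt ω v) (h1 : 1 ≤ r) (h2 : r + 1 ≤ n) :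
    bpsi 𝕜 κ r * (bY 𝕜 κ (r + 1) * v) =
      bY 𝕜 κ r * (bpsi 𝕜 κ r * v) - if ω r = ω (r + 1) then v else 0 := by
  have h := rel_eq (𝕜 := 𝕜) (n := n) (κ := κ) (blobRel.psi_y_slide (i := seqOf n ω) h1 h2)
  rw [ent_seqOf h1 (by omega), ent_seqOf (by omega) h2] at h
  unfold Wt at hv
  have h' := congrArg (· * v) h
  simp only [map_mul] at h'
  have e1 : RingQuot.mkAlgHom 𝕜 (blobRel 𝕜 (n := n) κ) (Eg 𝕜 (seqOf n ω)) * v = v := hv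
  rw [mul_assoc, e1, mul_assoc, mul_assoc, e1, map_sub, sub_mul, map_mul, mul_assoc] at h'
  refine h'.trans ?_
  split_ifs
  · rw [map_one, one_mul]; rfl
  · rw [map_zero, zero_mul]; rfl

lemma slide_gen' (hv : Wt ω v) (h1 : 1 ≤ r) (h2 : r + 1 ≤ n) :
    bY 𝕜 κ (r + 1) * (bpsi 𝕜 κ r * v) =
      bpsi 𝕜 κ r * (bY 𝕜 κ r * v) - if ω r = ω (r + 1) then v else 0 := by
  have h := rel_eq (𝕜 := 𝕜) (n := n) (κ := κ) (blobRel.y_psi_slide (i := seqOf n ω) h1 h2)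
  rw [ent_seqOf h1 (by omega), ent_seqOf (by omega) h2] at h
  unfold Wt at hv
  have h' := congrArg (· * v) h
  simp only [map_mul] at h'
  have e1 : RingQuot.mkAlgHom 𝕜 (blobRel 𝕜 (n := n) κ) (Eg 𝕜 (seqOf n ω)) * v = v := hv
  rw [mul_assoc, e1, mul_assoc, mul_assoc, e1, map_sub, sub_mul, map_mul, mul_assoc] at h'
  refine h'.trans ?_
  split_ifs
  · rw [map_one, one_mul]; rfl
  · rw [map_zero, zero_mul]; rfl

/-- Two residues are distant: neither equal nor neighbours in the quiver. -/
def Far (a b : ZMod e) : Prop := b ≠ a ∧ b ≠ a + 1 ∧ b ≠ a - 1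

lemma quad_far (hv : Wt ω v) (h1 : 1 ≤ r) (h2 : r + 1 ≤ n) (h : Far (ω r) (ω (r + 1))) :
    bpsi 𝕜 κ r * (bpsi 𝕜 κ r * v) = v := by
  rw [quad_gen hv h1 h2, if_neg h.1, if_neg h.2.1, if_neg h.2.2]

lemma quad_eq (hv : Wt ω v) (h1 : 1 ≤ r) (h2 : r + 1 ≤ n) (h : ω (r + 1) = ω r) :
    bpsi 𝕜 κ r * (bpsi 𝕜 κ r * v) = 0 := by
  rw [quad_gen hv h1 h2, if_pos h]

/-- The nilHecke relation `ψ_r y_{r+1} ψ_r = -ψ_r` on equal residues. -/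
lemma nil_right (hv : Wt ω v) (h1 : 1 ≤ r) (h2 : r + 1 ≤ n) (h : ω (r + 1) = ω r) :
    bpsi 𝕜 κ r * (bY 𝕜 κ (r + 1) * (bpsi 𝕜 κ r * v)) = - (bpsi 𝕜 κ r * v) := by
  rw [slide_gen' hv h1 h2, if_pos h.symm, mul_sub, quad_eq (hv.y r) h1 h2 h, zero_sub]

/-- The nilHecke relation `ψ_r y_r ψ_r = ψ_r` on equal residues. -/
lemma nil_left (hv : Wt ω v) (h1 : 1 ≤ r) (h2 : r + 1 ≤ n) (h : ω (r + 1) = ω r) :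
    bpsi 𝕜 κ r * (bY 𝕜 κ r * (bpsi 𝕜 κ r * v)) = bpsi 𝕜 κ r * v := by
  have hs := slide_gen hv h1 h2
  rw [if_pos h.symm] at hs
  have : bY 𝕜 κ r * (bpsi 𝕜 κ r * v) = bpsi 𝕜 κ r * (bY 𝕜 κ (r + 1) * v) + v := by
    rw [hs]; abel
  rw [this, mul_add, quad_eq (hv.y (r + 1)) h1 h2 h, zero_add]

end Algebra
end Blob

namespace Blob

/-! ### Diamonds on two equal strings of residues -/

section Diamond

/-- The product `ψ_r ψ_{r+1} ⋯ ψ_{r+p-1}`: the strand in position `r+p` moves left over `p` strands. -/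
def upE (𝕜 : Type) [Field 𝕜] {n e : ℕ} (κ : ZMod e × ZMod e) : ℕ → ℕ → BA 𝕜 n e κ
  | _, 0 => 1
  | r, p + 1 => bpsi 𝕜 κ r * upE 𝕜 κ (r + 1) p

/-- The product `ψ_{r+p-1} ⋯ ψ_{r+1} ψ_r`: the strand in position `r` moves right over `p` strands. -/
def dnE (𝕜 : Type) [Field 𝕜] {n e : ℕ} (κ : ZMod e × ZMod e) : ℕ → ℕ → BA 𝕜 n e κ
  | _, 0 => 1
  | r, p + 1 => dnE 𝕜 κ (r + 1) p * bpsi 𝕜 κ r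

/-- The diamond of size `k` crossing the strands in positions `g+1, …, g+k` with those in positions
`g+k+1, …, g+2k`, built up by peeling off the last strand of both groups. -/
def dia (𝕜 : Type) [Field 𝕜] {n e : ℕ} (κ : ZMod e × ZMod e) (g : ℕ) : ℕ → BA 𝕜 n e κ
  | 0 => 1
  | k + 1 => upE 𝕜 κ (g + k + 1) k *
      (dia 𝕜 κ g k * (bpsi 𝕜 κ (g + 2 * k + 1) * dnE 𝕜 κ (g + k + 1) k))

variable {𝕜 : Type} [Field 𝕜] {n e : ℕ} {κ : ZMod e × ZMod e}

lemma upE_commute {x : BA 𝕜 n e κ} (p : ℕ) : ∀ r : ℕ,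
    (∀ s, r ≤ s → s < r + p → Commute x (bpsi 𝕜 κ s)) → Commute x (upE 𝕜 κ r p) := by
  induction p with
  | zero => intro r _; exact Commute.one_right x
  | succ p ih =>
    intro r h
    exact (h r le_rfl (by omega)).mul_right (ih (r + 1) fun s h1 h2 => h s (by omega) (by omega))

lemma dnE_commute {x : BA 𝕜 n e κ} (p : ℕ) : ∀ r : ℕ,
    (∀ s, r ≤ s → s < r + p → Commute x (bpsi 𝕜 κ s)) → Commute x (dnE 𝕜 κ r p) := by
  induction p with
  | zero => intro r _; exact Commute.one_right x
  | succ p ih =>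
    intro r h
    exact (ih (r + 1) fun s h1 h2 => h s (by omega) (by omega)).mul_right (h r le_rfl (by omega))

lemma dia_commute {x : BA 𝕜 n e κ} (g k : ℕ)
    (h : ∀ s, g < s → s < g + 2 * k → Commute x (bpsi 𝕜 κ s)) : Commute x (dia 𝕜 κ g k) := by
  induction k with
  | zero => exact Commute.one_right x
  | succ k ih =>
    refine (upE_commute _ _ fun s h1 h2 => h s (by omega) (by omega)).mul_right ?_
    refine (ih fun s h1 h2 => h s (by omega) (by omega)).mul_right ?_
    refine (h _ (by omega) (by omega)).mul_right ?_
    exact dnE_commute _ _ fun s h1 h2 => h s (by omega) (by omega)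

lemma commute_psi_y {r s : ℕ} (h1 : s ≠ r) (h2 : s ≠ r + 1) :
    Commute (bY 𝕜 κ s : BA 𝕜 n e κ) (bpsi 𝕜 κ r) := (psi_y_comm h1 h2).symm

lemma commute_psi_psi {r s : ℕ} (h : r + 1 < s ∨ s + 1 < r) :
    Commute (bpsi 𝕜 κ r : BA 𝕜 n e κ) (bpsi 𝕜 κ s) := psi_comm h

lemma commute_y_y {r s : ℕ} : Commute (bY 𝕜 κ r : BA 𝕜 n e κ) (bY 𝕜 κ s) := y_comm

/-- The weight of `upE r p * v` for `v` of weight `ω`. -/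
def rotU (ω : ℕ → ZMod e) (r p : ℕ) : ℕ → ZMod e := fun q =>
  if q = r then ω (r + p) else if r < q ∧ q ≤ r + p then ω (q - 1) else ω q

/-- The weight of `dnE r p * v` for `v` of weight `ω`. -/
def rotD (ω : ℕ → ZMod e) (r p : ℕ) : ℕ → ZMod e := fun q =>
  if q = r + p then ω r else if r ≤ q ∧ q < r + p then ω (q + 1) else ω q

lemma rotU_rotD (ω : ℕ → ZMod e) (r p : ℕ) : rotU (rotD ω r p) r p = ω := by
  funext q
  unfold rotU rotD
  split_ifs <;> first | omega | (congr 1 <;> omega)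

lemma Wt.up (p : ℕ) : ∀ {ω : ℕ → ZMod e} {v : BA 𝕜 n e κ} {r : ℕ}, Wt ω v → 1 ≤ r → r + p ≤ n →
    Wt (rotU ω r p) (upE 𝕜 κ r p * v) := by
  induction p with
  | zero =>
    intro ω v r hv _ _
    have : rotU ω r 0 = ω := by
      funext q; unfold rotU; split_ifs <;> first | omega | (congr 1 <;> omega)
    simpa [upE, this] using hv
  | succ p ih =>
    intro ω v r hv h1 h2
    have h := (ih (r := r + 1) hv (by omega) (by omega)).psi h1 (by omega)
    rw [upE, mul_assoc]
    convert h using 1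
    funext q
    simp only [rotU, Function.comp, Equiv.swap_apply_def]
    split_ifs <;> first | omega | (congr 1 <;> omega)

lemma Wt.dn (p : ℕ) : ∀ {ω : ℕ → ZMod e} {v : BA 𝕜 n e κ} {r : ℕ}, Wt ω v → 1 ≤ r → r + p ≤ n →
    Wt (rotD ω r p) (dnE 𝕜 κ r p * v) := by
  induction p with
  | zero =>
    intro ω v r hv _ _
    have : rotD ω r 0 = ω := by
      funext q; unfold rotD; split_ifs <;> first | omega | (congr 1 <;> omega)
    simpa [dnE, this] using hv
  | succ p ih =>
    intro ω v r hv h1 h2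
    have h := ih (r := r + 1) (hv.psi h1 (by omega)) (by omega) (by omega)
    rw [dnE, mul_assoc]
    convert h using 1
    funext q
    simp only [rotD, Function.comp, Equiv.swap_apply_def]
    split_ifs <;> first | omega | (congr 1 <;> omega)

lemma natCast_ne_zero {e d : ℕ} (h1 : 1 ≤ d) (h2 : d < e) : (d : ZMod e) ≠ 0 := by
  rw [Ne, ZMod.natCast_eq_zero_iff]
  exact fun h => absurd (Nat.le_of_dvd (by omega) h) (by omega)

/-- Residues `ρ - x` and `ρ - y` are distant as soon as `2 ≤ y - x ≤ e - 2`. -/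
lemma far_sub {ρ : ZMod e} {x y : ℕ} (h1 : x + 2 ≤ y) (h2 : y + 2 ≤ e + x) :
    Far (ρ - (x : ZMod e)) (ρ - (y : ZMod e)) := by
  obtain ⟨d, rfl⟩ : ∃ d, y = x + 1 + d := ⟨y - x - 1, by omega⟩
  refine ⟨fun h => ?_, fun h => ?_, fun h => ?_⟩
  · refine natCast_ne_zero (e := e) (d := d + 1) (by omega) (by omega) ?_
    push_cast at h ⊢; linear_combination -h
  · refine natCast_ne_zero (e := e) (d := d + 2) (by omega) (by omega) ?_
    push_cast at h ⊢; linear_combination -h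
  · refine natCast_ne_zero (e := e) (d := d) (by omega) (by omega) ?_
    push_cast at h ⊢; linear_combination -h

lemma one_ne_zero_zmod (he : 4 ≤ e) : (1 : ZMod e) ≠ 0 := by
  simpa using natCast_ne_zero (e := e) (d := 1) (by omega) (by omega)

lemma two_ne_zero_zmod (he : 4 ≤ e) : (2 : ZMod e) ≠ 0 := by
  simpa using natCast_ne_zero (e := e) (d := 2) (by omega) (by omega)

/-- Pulling a strand off a string of strands, when its residue is adjacent only to the last one. -/
lemma cross_one (he : 4 ≤ e) (p : ℕ) : ∀ {ω : ℕ → ZMod e} {v : BA 𝕜 n e κ} {r : ℕ}, Wt ω v →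
    1 ≤ r → r + p + 1 ≤ n → (∀ x < p, Far (ω (r + x)) (ω (r + p + 1))) →
    ω (r + p + 1) = ω (r + p) - 1 →
    dnE 𝕜 κ r (p + 1) * (upE 𝕜 κ r (p + 1) * v) =
      bY 𝕜 κ (r + p) * v - bY 𝕜 κ (r + p + 1) * v := by
  induction p with
  | zero =>
    intro ω v r hv h1 h2 _ h
    have := quad_gen hv h1 h2
    simp only [add_zero] at h ⊢
    rw [h, if_neg, if_neg, if_pos rfl] at this
    · simpa [dnE, upE, sub_mul] using this
    · intro h'; exact two_ne_zero_zmod he (by linear_combination -h')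
    · intro h'; exact one_ne_zero_zmod he (by linear_combination -h')
  | succ p ih =>
    intro ω v r hv h1 h2 hfar h
    rw [dnE, upE]
    have hw := hv.up (p + 1) (r := r + 1) (by omega) (by omega)
    have hq := quad_far (r := r) hw h1 (by omega) (by
      have h3 := hfar 0 (by omega)
      have e1 : rotU ω (r + 1) (p + 1) r = ω (r + 0) := by
        unfold rotU; split_ifs <;> first | omega | rfl
      have e2 : rotU ω (r + 1) (p + 1) (r + 1) = ω (r + (p + 1) + 1) := by
        unfold rotU; split_ifs <;> first | omega | (congr 1 <;> omega)
      rwa [e1, e2])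
    rw [mul_assoc, mul_assoc, hq, ih hv (by omega) (by omega)]
    · congr 3 <;> ring
    · intro x hx
      have := hfar (x + 1) (by omega)
      convert this using 2 <;> ring
    · convert h using 2 <;> ring_nf

/-- The dot on the moving strand slides along `upE`. -/
lemma y_up (p : ℕ) : ∀ {ω : ℕ → ZMod e} {v : BA 𝕜 n e κ} {r : ℕ}, Wt ω v →
    1 ≤ r → r + p ≤ n → (∀ x < p, ω (r + x) ≠ ω (r + p)) →
    bY 𝕜 κ r * (upE 𝕜 κ r p * v) = upE 𝕜 κ r p * (bY 𝕜 κ (r + p) * v) := by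
  induction p with
  | zero => intro ω v r _ _ _ _; simp [upE]
  | succ p ih =>
    intro ω v r hv h1 h2 hne
    have hw := hv.up p (r := r + 1) (by omega) (by omega)
    have hs := slide_gen (r := r) hw h1 (by omega)
    have e1 : rotU ω (r + 1) p r = ω (r + 0) := by
      unfold rotU; split_ifs <;> first | omega | rfl
    have e2 : rotU ω (r + 1) p (r + 1) = ω (r + (p + 1)) := by
      unfold rotU; split_ifs <;> first | omega | (congr 1 <;> omega)
    rw [e1, e2, if_neg (hne 0 (by omega)), sub_zero] at hs
    rw [upE, mul_assoc, ← hs, ih hv (by omega) (by omega), mul_assoc]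
    · congr 4; omega
    · intro x hx
      have := hne (x + 1) (by omega)
      convert this using 2 <;> ring_nf

/-- Pulling a strand off a string of strands, when its residue is adjacent to the first and the
last one. -/
lemma cross_two (he : 4 ≤ e) (p : ℕ) {ω : ℕ → ZMod e} {v : BA 𝕜 n e κ} {r : ℕ} (hv : Wt ω v)
    (h1 : 1 ≤ r) (h2 : r + p + 2 ≤ n)
    (hfar : ∀ x < p, Far (ω (r + 1 + x)) (ω (r + p + 2)))
    (hlast : ω (r + p + 2) = ω (r + p + 1) - 1) (hfirst : ω (r + p + 2) = ω r + 1) :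
    dnE 𝕜 κ r (p + 2) * (upE 𝕜 κ r (p + 2) * v) =
      (bY 𝕜 κ (r + p + 1) - bY 𝕜 κ (r + p + 2)) *
        ((bY 𝕜 κ (r + p + 2) - bY 𝕜 κ r) * v) := by
  have a1 : r + 1 + p = r + p + 1 := by ring
  have a2 : r + 1 + p + 1 = r + p + 2 := by ring
  have a3 : r + 1 + (p + 1) = r + p + 2 := by ring
  rw [dnE, upE]
  have hw := hv.up (p + 1) (r := r + 1) (by omega) (by omega)
  have hq := quad_gen (r := r) hw h1 (by omega)
  have e1 : rotU ω (r + 1) (p + 1) r = ω r := by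
    unfold rotU; split_ifs <;> first | omega | rfl
  have e2 : rotU ω (r + 1) (p + 1) (r + 1) = ω r + 1 := by
    rw [← hfirst]
    unfold rotU; split_ifs <;> first | omega | (congr 1 <;> omega)
  rw [e1, e2, if_neg (by simpa using one_ne_zero_zmod he), if_pos rfl, sub_mul] at hq
  rw [mul_assoc, mul_assoc, hq, y_up (p + 1) hv (by omega) (by omega), a3,
    (upE_commute (x := bY 𝕜 κ r) (p + 1) (r + 1) fun s h1 h2 =>
      commute_psi_y (by omega) (by omega)).left_comm v, ← mul_sub, ← sub_mul]
  · have hv' : Wt ω ((bY 𝕜 κ (r + p + 2) - bY 𝕜 κ r) * v) := by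
      rw [sub_mul]; exact (hv.y _).sub (hv.y _)
    rw [cross_one he p hv' (by omega) (by omega), a1, ← sub_mul]
    · intro x hx
      rw [a2]; exact hfar x hx
    · rw [a2, a1]; exact hlast
  · intro x hx
    rw [a3]
    rcases Nat.lt_or_ge x p with h | h
    · exact (hfar x h).1.symm
    · obtain rfl : x = p := by omega
      rw [hlast, a1]
      intro hk; exact one_ne_zero_zmod he (by linear_combination hk)

/-- The residues in positions `g+1, …, g+2k` are `ρ, ρ-1, …, ρ-k+1` twice. -/
def Pat (k g : ℕ) (ρ : ZMod e) (ω : ℕ → ZMod e) : Prop :=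
  ∀ x < k, ω (g + 1 + x) = ρ - x ∧ ω (g + k + 1 + x) = ρ - x

/-- The residues in positions `g+1, …, g+2k+2` are `ρ, …, ρ-k+1` twice and then `ρ-k` twice. -/
def PatMid (k g : ℕ) (ρ : ZMod e) (ω : ℕ → ZMod e) : Prop :=
  Pat k g ρ ω ∧ ω (g + 2 * k + 1) = ρ - k ∧ ω (g + 2 * k + 2) = ρ - k

lemma Pat.mid {k g : ℕ} {ρ : ZMod e} {ω : ℕ → ZMod e} (h : Pat (k + 1) g ρ ω) :
    PatMid k g ρ (rotD ω (g + k + 1) k) := by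
  refine ⟨fun x hx => ⟨?_, ?_⟩, ?_, ?_⟩
  · rw [← (h x (by omega)).1]
    unfold rotD; split_ifs <;> first | omega | (congr 1 <;> omega)
  · rw [← (h x (by omega)).2]
    unfold rotD; split_ifs <;> first | omega | (congr 1 <;> omega)
  · rw [← (h k (by omega)).1]
    unfold rotD; split_ifs <;> first | omega | (congr 1 <;> omega)
  · rw [← (h k (by omega)).2]
    unfold rotD; split_ifs <;> first | omega | (congr 1 <;> omega)

lemma PatMid.wt_psi {k g : ℕ} {ρ : ZMod e} {ω : ℕ → ZMod e} {v : BA 𝕜 n e κ}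
    (h : PatMid k g ρ ω) (hv : Wt ω v) (hn : g + 2 * k + 2 ≤ n) :
    Wt ω (bpsi 𝕜 κ (g + 2 * k + 1) * v) := by
  have := hv.psi (r := g + 2 * k + 1) (by omega) (by omega)
  convert this using 1
  funext q
  simp only [Function.comp, Equiv.swap_apply_def]
  split_ifs with h1 h2
  · rw [h1, h.2.1]; exact h.2.2.symm
  · rw [h2, h.2.1]; exact h.2.2
  · rfl

lemma Wt.dia {g : ℕ} {ρ : ZMod e} (k : ℕ) : ∀ {ω : ℕ → ZMod e} {v : BA 𝕜 n e κ}, Wt ω v →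
    Pat k g ρ ω → g + 2 * k ≤ n → Wt ω (dia 𝕜 κ g k * v) := by
  induction k with
  | zero => intro ω v hv _ _; simpa [Blob.dia] using hv
  | succ k ih =>
    intro ω v hv hp hn
    have h1 := hv.dn k (r := g + k + 1) (by omega) (by omega)
    have h2 := ih (hp.mid.wt_psi h1 (by omega)) hp.mid.1 (by omega)
    have h3 := h2.up k (r := g + k + 1) (by omega) (by omega)
    rw [rotU_rotD] at h3
    simpa only [Blob.dia, mul_assoc] using h3

end Diamond
end Blob

namespace Blob

/-! ### Small diamonds behave like nilHecke crossings -/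

section DiamondRel

variable {𝕜 : Type} [Field 𝕜] {n e : ℕ} {κ : ZMod e × ZMod e}

/-- In `X P (a b) X P u` with commuting `X`, `P`, a factor `a` commuting with `P` and a factor `b`
commuting with `X` can be separated. -/
lemma split_mid {R : Type*} [Ring R] {X P a b u : R} (hPX : Commute P X) (ha : Commute P a)
    (hb : Commute b X) : X * (P * (a * (b * (X * (P * u))))) =
      X * (a * (X * (P * (b * (P * u))))) := by
  rw [ha.left_comm, hb.left_comm, hPX.left_comm]

/-- The evaluation behind the second relation of `dia_rel`. -/
lemma step_two {R : Type*} [Ring R] {X P ya yb yc u : R} {s : ℤ} (hPX : Commute P X)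
    (ha : Commute P ya) (hb : Commute yb X) (hc : Commute yc X)
    (hP : P * (yc * (P * u)) = -(P * u)) (h2 : X * (ya * (X * (P * u))) = s • (X * (P * u)))
    (hXX : X * (X * (P * (yb * (yc * (P * u))))) = 0) :
    X * (P * (ya * (yc * (X * (P * u))))) - X * (P * (yb * (yc * (X * (P * u))))) =
      (-s) • (X * (P * u)) := by
  rw [split_mid hPX ha hc, hP, hc.left_comm, hb.left_comm, hPX.left_comm, hXX, mul_neg, mul_neg,
    mul_neg, h2, neg_smul, sub_zero]

/-- The evaluation behind the third relation of `dia_rel`. -/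
lemma step_three {R : Type*} [Ring R] {X P ya yb yr u : R} {s : ℤ} (hPX : Commute P X)
    (ha : Commute P ya) (hr : Commute P yr) (hb : Commute yb X) (hbr : Commute yb yr)
    (hPP : P * (P * u) = 0)
    (hP : P * (yb * (P * u)) = P * u) (h3 : X * (yr * (X * (P * u))) = s • (X * (P * u))) :
    X * (P * (ya * (yr * (X * (P * u))))) - X * (P * (yb * (yr * (X * (P * u))))) =
      (-s) • (X * (P * u)) := by
  rw [ha.left_comm, hr.left_comm, hPX.left_comm, hPP, hbr.left_comm, split_mid hPX hr hb, hP, h3]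
  simp

/-- The three products evaluated in `dia_rel`, for the diamond of size `k` and `v`: the square
vanishes, and a dot on the last or the first strand of the right-hand group in between the two
factors gives back the diamond up to the sign `(-1)^k`. -/
def DiaRel (g k : ℕ) (v : BA 𝕜 n e κ) : Prop :=
  dia 𝕜 κ g k * (dia 𝕜 κ g k * v) = 0 ∧
  dia 𝕜 κ g k * (bY 𝕜 κ (g + 2 * k) * (dia 𝕜 κ g k * v)) = ((-1 : ℤ) ^ k) • (dia 𝕜 κ g k * v) ∧
  dia 𝕜 κ g k * (bY 𝕜 κ (g + k + 1) * (dia 𝕜 κ g k * v)) = ((-1 : ℤ) ^ k) • (dia 𝕜 κ g k * v)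

lemma commute_psi_dia (g k : ℕ) :
    Commute (bpsi 𝕜 κ (g + 2 * k + 1) : BA 𝕜 n e κ) (dia 𝕜 κ g k) :=
  dia_commute g k fun _ _ _ => commute_psi_psi (by omega)

lemma commute_y_dia {g k s : ℕ} (hs : g + 2 * k < s) :
    Commute (bY 𝕜 κ s : BA 𝕜 n e κ) (dia 𝕜 κ g k) :=
  dia_commute g k fun _ _ _ => commute_psi_y (by omega) (by omega)

/-- For at most `e - 1` strands on each side the diamond behaves like a single crossing of the
nilHecke algebra. -/
lemma dia_rel (he : 4 ≤ e) {g : ℕ} {ρ : ZMod e} (k : ℕ) : ∀ {ω : ℕ → ZMod e} {v : BA 𝕜 n e κ},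
    Wt ω v → Pat (k + 1) g ρ ω → g + 2 * (k + 1) ≤ n → k + 2 ≤ e → DiaRel g (k + 1) v := by
  induction k with
  | zero =>
    intro ω v hv hp hn _
    have h0 : ω (g + 1 + 1) = ω (g + 1) := by
      have := hp 0 (by omega)
      simp only [add_zero, zero_add] at this
      rw [this.1, this.2]
    have hd : dia 𝕜 κ g (0 + 1) = (bpsi 𝕜 κ (g + 1) : BA 𝕜 n e κ) := by simp [dia, upE, dnE]
    unfold DiaRel
    rw [hd]
    refine ⟨quad_eq hv (by omega) (by omega) h0, ?_, ?_⟩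
    · simpa using nil_right hv (by omega) (by omega) h0
    · simpa using nil_right hv (by omega) (by omega) h0
  | succ k ih =>
    intro ω v hv hp hn hk
    have hmid := hp.mid
    have hu := hv.dn (k + 1) (r := g + (k + 1) + 1) (by omega) (by omega)
    have hPu := hmid.wt_psi hu (by omega)
    set u := dnE 𝕜 κ (g + (k + 1) + 1) (k + 1) * v with hudef
    have hz := hPu.dia (k + 1) hmid.1 (by omega)
    obtain ⟨ih1, ih2, ih3⟩ := ih hPu hmid.1 (by omega) (by omega)
    set ω₁ := rotD ω (g + (k + 1) + 1) (k + 1)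
    have hPX := commute_psi_dia (𝕜 := 𝕜) (κ := κ) (n := n) g (k + 1)
    set X : BA 𝕜 n e κ := dia 𝕜 κ g (k + 1) with hX
    have hdv : dia 𝕜 κ g (k + 1 + 1) = upE 𝕜 κ (g + (k + 1) + 1) (k + 1) *
      (X * (bpsi 𝕜 κ (g + 2 * (k + 1) + 1) * dnE 𝕜 κ (g + (k + 1) + 1) (k + 1))) := rfl
    have heq : ω₁ (g + 2 * (k + 1) + 1 + 1) = ω₁ (g + 2 * (k + 1) + 1) := by
      rw [hmid.2.1]; exact hmid.2.2
    have hPP := quad_eq hu (r := g + 2 * (k + 1) + 1) (by omega) (by omega) heq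
    have hPyP := nil_left hu (r := g + 2 * (k + 1) + 1) (by omega) (by omega) heq
    have hPyP' := nil_right hu (r := g + 2 * (k + 1) + 1) (by omega) (by omega) heq
    have hYX := commute_y_dia (𝕜 := 𝕜) (κ := κ) (n := n) (g := g) (k := k + 1)
      (s := g + 2 * (k + 1) + 1) (by omega)
    have hYX' := commute_y_dia (𝕜 := 𝕜) (κ := κ) (n := n) (g := g) (k := k + 1)
      (s := g + 2 * (k + 1) + 1 + 1) (by omega)
    have hPa : ∀ s, s ≤ g + 2 * (k + 1) →
        Commute (bpsi 𝕜 κ (g + 2 * (k + 1) + 1) : BA 𝕜 n e κ) (bY 𝕜 κ s) :=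
      fun s hs => (commute_psi_y (by omega) (by omega)).symm
    rw [← hX] at hYX hYX'
    -- the strand of residue `ρ - k - 1` is only adjacent to the last strand it is pulled off
    have hcross : ∀ w : BA 𝕜 n e κ, Wt ω₁ w →
        dnE 𝕜 κ (g + (k + 1) + 1) (k + 1) * (upE 𝕜 κ (g + (k + 1) + 1) (k + 1) * w) =
          bY 𝕜 κ (g + 2 * (k + 1)) * w - bY 𝕜 κ (g + 2 * (k + 1) + 1) * w := by
      intro w hw
      have a1 : g + (k + 1) + 1 + k = g + 2 * (k + 1) := by ring
      rw [cross_one he k hw (by omega) (by omega), a1]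
      · intro x hx
        rw [a1, hmid.2.1, (hmid.1 x (by omega)).2]
        exact far_sub (by omega) (by omega)
      · rw [a1, hmid.2.1, ← a1, (hmid.1 k (by omega)).2]
        push_cast; ring
    have hyz : ∀ s, Wt ω₁ (bY 𝕜 κ s * (X * (bpsi 𝕜 κ (g + 2 * (k + 1) + 1) * u))) :=
      fun s => hz.y s
    have sgn : ((-1 : ℤ) ^ (k + 1 + 1)) = - ((-1 : ℤ) ^ (k + 1)) := by ring
    set z := X * (bpsi 𝕜 κ (g + 2 * (k + 1) + 1) * u) with hzdef
    have hA : X * (bpsi 𝕜 κ (g + 2 * (k + 1) + 1) * (bY 𝕜 κ (g + 2 * (k + 1)) * z)) = 0 := by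
      have := split_mid (u := u) hPX (hPa _ le_rfl) (Commute.one_left X)
      rw [one_mul, one_mul, hPP, mul_zero, mul_zero, mul_zero] at this
      exact this
    have hB : X * (bpsi 𝕜 κ (g + 2 * (k + 1) + 1) * (bY 𝕜 κ (g + 2 * (k + 1) + 1) * z)) = 0 := by
      have := split_mid (u := u) hPX (Commute.one_right _) hYX
      rw [one_mul, one_mul, hPyP, ih1] at this
      exact this
    have hup : ∀ s, g + 2 * (k + 1) + 1 < s →
        Commute (bY 𝕜 κ s : BA 𝕜 n e κ) (upE 𝕜 κ (g + (k + 1) + 1) (k + 1)) :=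
      fun s hs => upE_commute _ _ fun _ _ _ => commute_psi_y (by omega) (by omega)
    refine ⟨?_, ?_, ?_⟩
    · simp only [hdv, mul_assoc, ← hudef, ← hzdef]
      rw [hcross z hz, mul_sub, mul_sub, hA, hB, sub_zero, mul_zero]
    · simp only [hdv, mul_assoc, ← hudef, ← hzdef]
      rw [show g + 2 * (k + 1 + 1) = g + 2 * (k + 1) + 1 + 1 by ring,
        (hup (g + 2 * (k + 1) + 1 + 1) (by omega)).left_comm, hcross _ (hyz _), mul_sub, mul_sub]
      have hXX := (ih (hmid.wt_psi ((hPu.y (g + 2 * (k + 1) + 1 + 1)).y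
        (g + 2 * (k + 1) + 1)) (by omega)) hmid.1 (by omega) (by omega)).1
      have := step_two hPX (hPa _ le_rfl) hYX hYX' hPyP' ih2 hXX
      rw [sgn]
      exact (congrArg _ this).trans (mul_smul_comm _ _ _)
    · simp only [hdv, mul_assoc, ← hudef, ← hzdef]
      have hslide : bY 𝕜 κ (g + (k + 1 + 1) + 1) * (upE 𝕜 κ (g + (k + 1) + 1) (k + 1) * z) =
          upE 𝕜 κ (g + (k + 1) + 1) (k + 1) * (bY 𝕜 κ (g + (k + 1) + 1) * z) := by
        have hw := hz.up k (r := g + (k + 1) + 1 + 1) (by omega) (by omega)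
        have hs := slide_gen' (r := g + (k + 1) + 1) hw (by omega) (by omega)
        have e1 : rotU ω₁ (g + (k + 1) + 1 + 1) k (g + (k + 1) + 1) = ρ := by
          have := (hmid.1 0 (by omega)).2
          simp only [add_zero, Nat.cast_zero, sub_zero] at this
          rw [← this]
          unfold rotU; split_ifs <;> first | omega | rfl
        have e2 : rotU ω₁ (g + (k + 1) + 1 + 1) k (g + (k + 1) + 1 + 1) = ρ - (k + 1 : ℕ) := by
          rw [← hmid.2.1]
          unfold rotU; split_ifs <;> first | omega | (congr 1 <;> omega)
        rw [e1, e2, if_neg, sub_zero] at hs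
        · rw [upE, mul_assoc, show g + (k + 1 + 1) + 1 = g + (k + 1) + 1 + 1 by ring, hs,
            (upE_commute (x := bY 𝕜 κ (g + (k + 1) + 1)) k (g + (k + 1) + 1 + 1) fun s h1 h2 =>
              commute_psi_y (by omega) (by omega)).left_comm, mul_assoc]
        · intro h'
          exact natCast_ne_zero (e := e) (d := k + 1) (by omega) (by omega)
            (by linear_combination h')
      rw [hslide, hcross _ (hyz _), mul_sub, mul_sub]
      have := step_three hPX (hPa _ le_rfl) (hPa _ (by omega)) hYX commute_y_y hPP hPyP ih3
      rw [sgn]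
      exact (congrArg _ this).trans (mul_smul_comm _ _ _)

end DiamondRel
end Blob

namespace Blob

/-! ### The diamond of size `e` -/

section DiamondTop

variable {𝕜 : Type} [Field 𝕜] {n e : ℕ} {κ : ZMod e × ZMod e}

/-- The evaluation behind `dia_absorb`. -/
lemma step_top {R : Type*} [Ring R] {X P ya yb yr u : R} {s : ℤ} (hPX : Commute P X)
    (ha : Commute P ya) (hr : Commute P yr) (hb : Commute yb X) (hbr : Commute yb yr)
    (hPP : P * (P * u) = 0) (hP : P * (yb * (P * u)) = P * u)
    (h2 : X * (ya * (X * (P * u))) = s • (X * (P * u)))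
    (h3 : X * (yr * (X * (P * u))) = s • (X * (P * u)))
    (hXX : X * (X * (P * (yb * (yb * (P * u))))) = 0) :
    X * (P * ((ya - yb) * ((yb - yr) * (X * (P * u))))) = (2 * s) • (X * (P * u)) := by
  have e1 : X * (P * (ya * (yb * (X * (P * u))))) = s • (X * (P * u)) := by
    rw [split_mid hPX ha hb, hP, h2]
  have e2 : X * (P * (ya * (yr * (X * (P * u))))) = 0 := by
    rw [ha.left_comm, hr.left_comm, hPX.left_comm, hPP]
    simp
  have e3 : X * (P * (yb * (yb * (X * (P * u))))) = 0 := by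
    rw [hb.left_comm, hb.left_comm, hPX.left_comm, hXX]
  have e4 : X * (P * (yb * (yr * (X * (P * u))))) = s • (X * (P * u)) := by
    rw [hbr.left_comm, split_mid hPX hr hb, hP, h3]
  simp only [sub_mul, mul_sub, e1, e2, e3, e4, two_mul, add_smul]
  abel

/-- The partial diamond obtained from the diamond of size `k + 1` by leaving out the last row of
crossings. -/
def topE (𝕜 : Type) [Field 𝕜] {n e : ℕ} (κ : ZMod e × ZMod e) (g k : ℕ) : BA 𝕜 n e κ :=
  upE 𝕜 κ (g + k + 1) k * (dia 𝕜 κ g k * bpsi 𝕜 κ (g + 2 * k + 1))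

/-- The diamond of size `e` acts on a partial diamond as `±2`: the strand of residue `ρ + 1` that is
pulled through is adjacent to both ends of the string, and both ends contribute. -/
lemma dia_absorb (he : 4 ≤ e) {g k : ℕ} {ρ : ZMod e} {ω : ℕ → ZMod e} {v : BA 𝕜 n e κ}
    (hke : k + 1 = e) (hv : Wt ω v) (hp : PatMid k g ρ ω) (hn : g + 2 * (k + 1) ≤ n) :
    dia 𝕜 κ g (k + 1) * (topE 𝕜 κ g k * v) = (2 * (-1 : ℤ) ^ k) • (topE 𝕜 κ g k * v) := by
  obtain ⟨p, rfl⟩ : ∃ p, k = p + 2 := ⟨k - 2, by omega⟩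
  have hPv := hp.wt_psi hv (by omega)
  have hz := hPv.dia (p + 2) hp.1 (by omega)
  have heq : ω (g + 2 * (p + 2) + 1 + 1) = ω (g + 2 * (p + 2) + 1) := by
    rw [hp.2.1]; exact hp.2.2
  obtain ⟨-, d2, d3⟩ := dia_rel he (p + 1) hPv hp.1 (by omega) (by omega)
  have hXX := (dia_rel he (p + 1) (hp.wt_psi ((hPv.y (g + 2 * (p + 2) + 1)).y
        (g + 2 * (p + 2) + 1)) (by omega)) hp.1 (by omega) (by omega)).1
  have hPa : ∀ s, s ≤ g + 2 * (p + 2) →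
      Commute (bpsi 𝕜 κ (g + 2 * (p + 2) + 1) : BA 𝕜 n e κ) (bY 𝕜 κ s) :=
    fun s hs => (commute_psi_y (by omega) (by omega)).symm
  have a1 : g + (p + 2) + 1 + p + 1 = g + 2 * (p + 2) := by ring
  have a2 : g + (p + 2) + 1 + p + 2 = g + 2 * (p + 2) + 1 := by ring
  have hc := cross_two he p hz (r := g + (p + 2) + 1) (by omega) (by omega)
    (by
      intro x hx
      have h1 := (hp.1 (1 + x) (by omega)).2
      rw [a2, hp.2.1, add_assoc _ 1 x, h1]
      exact far_sub (by omega) (by omega))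
    (by
      have h1 := (hp.1 (p + 1) (by omega)).2
      rw [a2, hp.2.1, add_assoc _ p 1, h1]
      push_cast; ring)
    (by
      have h1 := (hp.1 0 (by omega)).2
      have h2 : ((p + 2 + 1 : ℕ) : ZMod e) = 0 := by rw [hke]; simp
      simp only [add_zero, Nat.cast_zero, sub_zero] at h1
      rw [a2, hp.2.1, h1]
      push_cast at h2 ⊢
      linear_combination -h2)
  rw [a1, a2] at hc
  have h := step_top (commute_psi_dia g (p + 2)) (hPa _ le_rfl)
    (hPa (g + (p + 2) + 1) (by omega)) (commute_y_dia (by omega)) commute_y_y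
    (quad_eq hv (r := g + 2 * (p + 2) + 1) (by omega) (by omega) heq)
    (nil_left hv (r := g + 2 * (p + 2) + 1) (by omega) (by omega) heq) d2 d3 hXX
  rw [← hc] at h
  have h' := (congrArg (upE 𝕜 κ (g + (p + 2) + 1) (p + 2) * ·) h).trans (mul_smul_comm _ _ _)
  simpa only [dia, topE, mul_assoc] using h'

end DiamondTop
end Blob

namespace Blob

/-! ### Layered diamonds -/

section Layers

variable {𝕜 : Type} [Field 𝕜] {n e : ℕ} {κ : ZMod e × ZMod e}

lemma upE_succ_right (p : ℕ) : ∀ r, (upE 𝕜 κ r (p + 1) : BA 𝕜 n e κ) =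
    upE 𝕜 κ r p * bpsi 𝕜 κ (r + p) := by
  induction p with
  | zero => intro r; simp [upE]
  | succ p ih =>
    intro r
    rw [upE, ih (r + 1), upE, mul_assoc]
    congr 3; ring

lemma dnE_succ_left (p : ℕ) : ∀ r, (dnE 𝕜 κ r (p + 1) : BA 𝕜 n e κ) =
    bpsi 𝕜 κ (r + p) * dnE 𝕜 κ r p := by
  induction p with
  | zero => intro r; simp [dnE]
  | succ p ih =>
    intro r
    rw [dnE, ih (r + 1), dnE, mul_assoc]
    congr 2; ring

/-- The product of the first `k` layers of a diamond centred at `f`. -/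
def triE (𝕜 : Type) [Field 𝕜] {n e : ℕ} (κ : ZMod e × ZMod e) (f k : ℕ) : BA 𝕜 n e κ :=
  ((List.range k).map (layerElt 𝕜 κ f)).prod

/-- The product of the last `k` layers of a diamond centred at `f`. -/
def triR (𝕜 : Type) [Field 𝕜] {n e : ℕ} (κ : ZMod e × ZMod e) (f k : ℕ) : BA 𝕜 n e κ :=
  ((List.range k).reverse.map (layerElt 𝕜 κ f)).prod

lemma triE_succ (f k : ℕ) :
    (triE 𝕜 κ f (k + 1) : BA 𝕜 n e κ) = triE 𝕜 κ f k * layerElt 𝕜 κ f k := by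
  simp [triE, List.range_succ]

lemma triR_succ (f k : ℕ) :
    (triR 𝕜 κ f (k + 1) : BA 𝕜 n e κ) = layerElt 𝕜 κ f k * triR 𝕜 κ f k := by
  simp [triR, List.range_succ]

lemma layer_succ {f a : ℕ} (h : a ≤ f) : (layerElt 𝕜 κ (f + 1) (a + 1) : BA 𝕜 n e κ) =
    layerElt 𝕜 κ f a * bpsi 𝕜 κ (f + a + 2) := by
  unfold layerElt
  rw [List.range_succ (n := a + 1), List.map_append, List.prod_append]
  simp only [List.map_cons, List.map_nil, List.prod_cons, List.prod_nil, mul_one]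
  congr 2
  · congr 1
    funext b
    congr 1
    omega
  · omega

lemma layer_commute {x : BA 𝕜 n e κ} {f a : ℕ} (h' : a ≤ f)
    (h : ∀ s, s ≤ f + a → Commute x (bpsi 𝕜 κ s)) : Commute x (layerElt 𝕜 κ f a) := by
  unfold layerElt
  refine Commute.list_prod_right _ _ fun y hy => ?_
  obtain ⟨b, hb, rfl⟩ := List.mem_map.1 hy
  have := List.mem_range.1 hb
  exact h _ (by omega)

lemma triE_commute {x : BA 𝕜 n e κ} {f k : ℕ} (hk : k ≤ f + 1)
    (h : ∀ s, s < f + k → Commute x (bpsi 𝕜 κ s)) : Commute x (triE 𝕜 κ f k) := by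
  unfold triE
  refine Commute.list_prod_right _ _ fun y hy => ?_
  obtain ⟨b, hb, rfl⟩ := List.mem_map.1 hy
  have := List.mem_range.1 hb
  exact layer_commute (by omega) fun s hs => h _ (by omega)

lemma triR_commute {x : BA 𝕜 n e κ} {f k : ℕ} (hk : k ≤ f + 1)
    (h : ∀ s, s < f + k → Commute x (bpsi 𝕜 κ s)) : Commute x (triR 𝕜 κ f k) := by
  unfold triR
  refine Commute.list_prod_right _ _ fun y hy => ?_
  obtain ⟨b, hb, rfl⟩ := List.mem_map.1 hy
  have := List.mem_range.1 (List.mem_reverse.1 hb)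
  exact layer_commute (by omega) fun s hs => h _ (by omega)

lemma layer_zero (f : ℕ) : (layerElt 𝕜 κ f 0 : BA 𝕜 n e κ) = bpsi 𝕜 κ f := by
  simp [layerElt]

/-- The last strand of the upper half of a diamond can be split off. -/
lemma triE_shift {f : ℕ} (k : ℕ) (hk : k ≤ f + 1) :
    (triE 𝕜 κ (f + 1) (k + 1) : BA 𝕜 n e κ) = upE 𝕜 κ (f + 1) (k + 1) * triE 𝕜 κ f k := by
  induction k with
  | zero => simp [triE, upE, layer_zero]
  | succ k ih =>
    have hc : Commute (bpsi 𝕜 κ (f + k + 2) : BA 𝕜 n e κ) (triE 𝕜 κ f (k + 1)) :=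
      triE_commute (by omega) fun s hs => commute_psi_psi (by omega)
    have a : f + 1 + (k + 1) = f + k + 2 := by ring
    rw [triE_succ, ih (by omega), layer_succ (by omega), mul_assoc, ← mul_assoc (triE 𝕜 κ f k),
      ← triE_succ, ← hc.eq, upE_succ_right (k + 1), a, mul_assoc]

/-- The last strand of the lower half of a diamond can be split off. -/
lemma triR_shift {f : ℕ} (k : ℕ) (hk : k ≤ f + 1) :
    (triR 𝕜 κ (f + 1) (k + 1) : BA 𝕜 n e κ) = triR 𝕜 κ f k * dnE 𝕜 κ (f + 1) (k + 1) := by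
  induction k with
  | zero => simp [triR, dnE, layer_zero]
  | succ k ih =>
    have hc : Commute (bpsi 𝕜 κ (f + k + 2) : BA 𝕜 n e κ) (triR 𝕜 κ f k) :=
      triR_commute (by omega) fun s hs => commute_psi_psi (by omega)
    have a : f + 1 + (k + 1) = f + k + 2 := by ring
    rw [triR_succ, ih (by omega), layer_succ (by omega), dnE_succ_left (k + 1), a, triR_succ,
      mul_assoc, ← mul_assoc (bpsi 𝕜 κ (f + k + 2)), hc.eq]
    simp only [mul_assoc]

/-- The layered diamond agrees with the recursively built one. -/
lemma layered_eq_dia (g k : ℕ) :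
    (triE 𝕜 κ (g + (k + 1)) (k + 1) * triR 𝕜 κ (g + (k + 1)) k : BA 𝕜 n e κ) =
      dia 𝕜 κ g (k + 1) := by
  induction k with
  | zero => simp [triE, triR, dia, upE, dnE, layer_zero]
  | succ k ih =>
    have a : g + (k + 1) + 1 + (k + 1) = g + 2 * (k + 1) + 1 := by ring
    rw [show g + (k + 1 + 1) = g + (k + 1) + 1 by ring, triE_shift (k + 1) (by omega),
      triR_shift k (by omega), mul_assoc, ← mul_assoc (triE 𝕜 κ _ _), ih,
      upE_succ_right, a, mul_assoc, ← mul_assoc (bpsi 𝕜 κ _), (commute_psi_dia g (k + 1)).eq, mul_assoc]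
    rfl

end Layers
end Blob

namespace Blob

/-! ### Column words, heights and simple transpositions -/

/-- The tableau with the given (1-based) column word. -/
def tab (n : ℕ) (τ : ℕ → Fin 2) : StdTab n := fun j => τ (j + 1)

/-- The number of entries `≤ k` in column `a`. -/
def cnt (τ : ℕ → Fin 2) (a : Fin 2) : ℕ → ℕ
  | 0 => 0
  | k + 1 => cnt τ a k + if τ (k + 1) = a then 1 else 0

/-- The height after `k` steps of the path of a column word. -/
def hgt (τ : ℕ → Fin 2) (k : ℕ) : ℤ := cnt τ 0 k - cnt τ 1 k

/-- The direction of a step of the path. -/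
def sg (a : Fin 2) : ℤ := if a = 0 then 1 else -1

/-- The action of the simple transposition `s_r` on column words. -/
def sw (r : ℕ) (τ : ℕ → Fin 2) : ℕ → Fin 2 := τ ∘ Equiv.swap r (r + 1)

/-- The number of boxes above the box of entry `p`. -/
def pos (τ : ℕ → Fin 2) (p : ℕ) : ℕ := cnt τ (τ p) (p - 1)

lemma fin2 (a : Fin 2) : a = 0 ∨ a = 1 := by fin_cases a <;> simp

lemma fin2_ne {a b c : Fin 2} (h : a ≠ b) (h' : c ≠ b) : a = c := by
  rcases fin2 a with rfl | rfl <;> rcases fin2 b with rfl | rfl <;> rcases fin2 c with rfl | rfl <;>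
    simp_all

lemma cnt_add (τ : ℕ → Fin 2) (k : ℕ) : cnt τ 0 k + cnt τ 1 k = k := by
  induction k with
  | zero => rfl
  | succ k ih =>
    simp only [cnt]
    rcases fin2 (τ (k + 1)) with h | h <;> simp [h] <;> omega

lemma hgt_zero (τ : ℕ → Fin 2) : hgt τ 0 = 0 := rfl

lemma hgt_succ (τ : ℕ → Fin 2) (k : ℕ) : hgt τ (k + 1) = hgt τ k + sg (τ (k + 1)) := by
  simp only [hgt, cnt, sg]
  rcases fin2 (τ (k + 1)) with h | h <;> simp [h] <;> omega

lemma cnt_congr {τ τ' : ℕ → Fin 2} {a : Fin 2} (k : ℕ) (h : ∀ j, 1 ≤ j → j ≤ k → τ j = τ' j) :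
    cnt τ a k = cnt τ' a k := by
  induction k with
  | zero => rfl
  | succ k ih =>
    simp only [cnt]
    rw [ih fun j h1 h2 => h j h1 (by omega), h (k + 1) (by omega) le_rfl]

lemma hgt_congr {τ τ' : ℕ → Fin 2} (k : ℕ) (h : ∀ j, 1 ≤ j → j ≤ k → τ j = τ' j) :
    hgt τ k = hgt τ' k := by
  unfold hgt; rw [cnt_congr k h, cnt_congr k h]

lemma sw_left (r : ℕ) (τ : ℕ → Fin 2) : sw r τ r = τ (r + 1) := by simp [sw]

lemma sw_right (r : ℕ) (τ : ℕ → Fin 2) : sw r τ (r + 1) = τ r := by simp [sw]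

lemma sw_other {r q : ℕ} (τ : ℕ → Fin 2) (h1 : q ≠ r) (h2 : q ≠ r + 1) : sw r τ q = τ q := by
  simp [sw, Equiv.swap_apply_of_ne_of_ne h1 h2]

lemma sw_sw (r : ℕ) (τ : ℕ → Fin 2) : sw r (sw r τ) = τ := by
  funext q; simp [sw]

lemma sw_comm {r s : ℕ} (h : r + 1 < s) (τ : ℕ → Fin 2) : sw r (sw s τ) = sw s (sw r τ) := by
  funext q
  simp only [sw, Function.comp, Equiv.swap_apply_def]
  split_ifs <;> omega

lemma cnt_sw {r : ℕ} (hr : 1 ≤ r) (τ : ℕ → Fin 2) (a : Fin 2) {k : ℕ} (hk : k ≠ r) :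
    cnt (sw r τ) a k = cnt τ a k := by
  rcases Nat.lt_or_ge k r with h | h
  · exact cnt_congr k fun j _ _ => sw_other τ (by omega) (by omega)
  · obtain ⟨d, rfl⟩ : ∃ d, k = r + 1 + d := ⟨k - r - 1, by omega⟩
    clear hk h
    induction d with
    | zero =>
      obtain ⟨s, rfl⟩ : ∃ s, r = s + 1 := ⟨r - 1, by omega⟩
      simp only [cnt, sw_left, sw_right]
      rw [cnt_congr (τ' := τ) s fun j _ _ => sw_other τ (by omega) (by omega)]
      omega
    | succ d ih =>
      rw [← add_assoc, cnt, cnt, ih, sw_other τ (by omega) (by omega)]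

lemma hgt_sw {r : ℕ} (hr : 1 ≤ r) (τ : ℕ → Fin 2) {k : ℕ} (hk : k ≠ r) :
    hgt (sw r τ) k = hgt τ k := by
  unfold hgt; rw [cnt_sw hr τ _ hk, cnt_sw hr τ _ hk]

lemma pos_sw {r : ℕ} (hr : 1 ≤ r) {τ : ℕ → Fin 2} (h : τ r ≠ τ (r + 1)) (p : ℕ) (hp : 1 ≤ p) :
    pos (sw r τ) p = pos τ (Equiv.swap r (r + 1) p) := by
  obtain ⟨s, rfl⟩ : ∃ s, r = s + 1 := ⟨r - 1, by omega⟩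
  unfold pos
  by_cases h1 : p = s + 1
  · subst h1
    rw [sw_left, Equiv.swap_apply_left]
    simp only [Nat.add_sub_cancel, cnt]
    rw [cnt_sw hr τ _ (by omega), if_neg h, add_zero]
  · by_cases h2 : p = s + 1 + 1
    · subst h2
      rw [sw_right, Equiv.swap_apply_right]
      simp only [Nat.add_sub_cancel, cnt]
      rw [cnt_congr s fun j _ _ => sw_other τ (by omega) (by omega), sw_left, if_neg h.symm,
        add_zero]
    · rw [sw_other τ h1 h2, Equiv.swap_apply_of_ne_of_ne h1 h2, cnt_sw hr τ _ (by omega)]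

lemma ncard_cnt {n : ℕ} (τ : ℕ → Fin 2) (a : Fin 2) {k : ℕ} (hk : k ≤ n) :
    Set.ncard {j : Fin n | (j : ℕ) < k ∧ tab n τ j = a} = cnt τ a k := by
  induction k with
  | zero => simp [cnt]
  | succ k ih =>
    rw [cnt, ← ih (by omega)]
    split_ifs with h
    · have : {j : Fin n | (j : ℕ) < k + 1 ∧ tab n τ j = a} =
          insert ⟨k, hk⟩ {j : Fin n | (j : ℕ) < k ∧ tab n τ j = a} := by
        ext j
        simp only [Set.mem_ofPred_eq, Set.mem_insert_iff, Fin.ext_iff]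
        constructor
        · rintro ⟨h1, h2⟩
          by_cases h3 : (j : ℕ) = k
          · exact Or.inl h3
          · exact Or.inr ⟨by omega, h2⟩
        · rintro (h1 | ⟨h1, h2⟩)
          · refine ⟨by omega, ?_⟩
            unfold tab; rw [h1, h]
          · exact ⟨by omega, h2⟩
      rw [this, Set.ncard_insert_of_notMem (by simp)]
    · rw [add_zero]
      congr 1
      ext j
      simp only [Set.mem_ofPred_eq]
      constructor
      · rintro ⟨h1, h2⟩
        refine ⟨?_, h2⟩
        rcases Nat.lt_or_ge (j : ℕ) k with h3 | h3
        · exact h3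
        · exfalso; apply h
          have h4 : (j : ℕ) = k := by omega
          unfold tab at h2; rwa [h4] at h2
      · rintro ⟨h1, h2⟩; exact ⟨by omega, h2⟩

lemma pathOf_tab {n : ℕ} (τ : ℕ → Fin 2) {k : ℕ} (hk : k ≤ n) : pathOf (tab n τ) k = hgt τ k := by
  unfold pathOf hgt
  rw [ncard_cnt τ 0 hk, ncard_cnt τ 1 hk]

lemma cwt_tab {n : ℕ} (τ : ℕ → Fin 2) : cwt (tab n τ) = hgt τ n := by
  unfold cwt hgt
  rw [← ncard_cnt τ 0 le_rfl, ← ncard_cnt τ 1 le_rfl]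
  simp

lemma rowOf_tab {n : ℕ} (τ : ℕ → Fin 2) (j : Fin n) : rowOf (tab n τ) j = pos τ (j + 1) + 1 := by
  have h : rowOf (tab n τ) j = cnt τ (τ (j + 1)) (j + 1) := by
    rw [← ncard_cnt τ _ (show (j : ℕ) + 1 ≤ n by omega)]
    unfold rowOf
    congr 1
    ext j'
    simp only [Set.mem_ofPred_eq, Fin.le_def, Nat.lt_succ_iff]
    rfl
  rw [h, pos, cnt, if_pos rfl, Nat.add_sub_cancel]

/-- The charge of a column. -/
def kk {e : ℕ} (κ : ZMod e × ZMod e) (a : Fin 2) : ZMod e := if a = 0 then κ.1 else κ.2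

/-- The residue of the box of entry `p`. -/
def rs {e : ℕ} (κ : ZMod e × ZMod e) (τ : ℕ → Fin 2) (p : ℕ) : ZMod e := kk κ (τ p) - pos τ p

lemma resOf_tab {n e : ℕ} (κ : ZMod e × ZMod e) (τ : ℕ → Fin 2) :
    resOf κ (tab n τ) = seqOf n (rs κ τ) := by
  funext j
  rw [resOf, rowOf_tab]
  change kk κ (τ (j + 1)) + 1 - ((pos τ (j + 1) + 1 : ℕ) : ZMod e) = kk κ (τ (j + 1)) - pos τ (j + 1)
  push_cast
  ring

lemma rs_sw {e : ℕ} (κ : ZMod e × ZMod e) {r : ℕ} (hr : 1 ≤ r) {τ : ℕ → Fin 2}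
    (h : τ r ≠ τ (r + 1)) {p : ℕ} (hp : 1 ≤ p) :
    rs κ (sw r τ) p = (rs κ τ ∘ Equiv.swap r (r + 1)) p := by
  simp only [rs, pos_sw hr h p hp, Function.comp]
  rfl

lemma sPerm_val {n r : ℕ} (h1 : 1 ≤ r) (h2 : r < n) (j : Fin n) :
    ((sPerm n r j : Fin n) : ℕ) + 1 = Equiv.swap r (r + 1) (j + 1) := by
  have h : 1 ≤ r ∧ r < n := ⟨h1, h2⟩
  simp only [sPerm, h, and_self, dif_pos, Equiv.swap_apply_def, Fin.ext_iff]
  split_ifs <;> first | omega | (simp; omega) | simp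

end Blob

namespace Blob

/-! ### Reduced words from descents -/

/-- `r` is a descent of the column word `τ`: exchanging the entries `r` and `r+1` moves the tableau
towards the dominant one. -/
def Desc (τ : ℕ → Fin 2) (r : ℕ) : Prop :=
  τ r ≠ τ (r + 1) ∧ ((τ r = 0 ∧ 1 ≤ hgt τ (r - 1)) ∨ (τ r = 1 ∧ hgt τ (r - 1) ≤ 0))

/-- `Red n τ₀ w τ`: applying the letters of `w` to `τ` from the left, always at a descent, ends
at `τ₀`. -/
inductive Red (n : ℕ) (τ₀ : ℕ → Fin 2) : List ℕ → (ℕ → Fin 2) → Prop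
  | nil : Red n τ₀ [] τ₀
  | cons {r : ℕ} {w : List ℕ} {τ : ℕ → Fin 2} (h1 : 1 ≤ r) (h2 : r < n) (hd : Desc τ r)
      (h : Red n τ₀ w (sw r τ)) : Red n τ₀ (r :: w) τ

/-- The contribution of height `h` to the potential `pot`. -/
def phi (h : ℤ) : ℤ := if 0 ≤ h then h / 2 else (1 - h) / 2

/-- A potential which drops by exactly one at each descent and by at most one at any simple
transposition; up to a constant it is the length of the permutation of the tableau. -/
def pot (n : ℕ) (τ : ℕ → Fin 2) : ℤ := ∑ k ∈ Finset.range (n + 1), phi (hgt τ k)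

lemma phi_nonneg (h : ℤ) : 0 ≤ phi h := by unfold phi; split_ifs <;> omega

lemma pot_nonneg (n : ℕ) (τ : ℕ → Fin 2) : 0 ≤ pot n τ :=
  Finset.sum_nonneg fun _ _ => phi_nonneg _

lemma pot_sw {n r : ℕ} (h1 : 1 ≤ r) (h2 : r < n) (τ : ℕ → Fin 2) :
    pot n (sw r τ) - phi (hgt τ (r - 1) + sg (τ (r + 1))) =
      pot n τ - phi (hgt τ (r - 1) + sg (τ r)) := by
  have hr : r ∈ Finset.range (n + 1) := Finset.mem_range.2 (by omega)
  obtain ⟨s, rfl⟩ : ∃ s, r = s + 1 := ⟨r - 1, by omega⟩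
  unfold pot
  rw [← Finset.add_sum_erase _ _ hr, ← Finset.add_sum_erase (Finset.range (n + 1)) _ hr,
    hgt_succ, hgt_succ, sw_left, Nat.add_sub_cancel, hgt_sw h1 τ (by omega),
    Finset.sum_congr rfl fun k hk => by rw [hgt_sw h1 τ (Finset.ne_of_mem_erase hk)]]
  ring

lemma pot_le {n r : ℕ} (h1 : 1 ≤ r) (h2 : r < n) (τ : ℕ → Fin 2) :
    pot n τ ≤ pot n (sw r τ) + 1 := by
  have h := pot_sw h1 h2 τ
  generalize hgt τ (r - 1) = z at h
  unfold phi sg at h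
  split_ifs at h <;> omega

lemma pot_desc {n r : ℕ} (h1 : 1 ≤ r) (h2 : r < n) {τ : ℕ → Fin 2} (hd : Desc τ r) :
    pot n τ = pot n (sw r τ) + 1 := by
  have h := pot_sw h1 h2 τ
  obtain ⟨hne, h3⟩ := hd
  generalize hgt τ (r - 1) = z at h h3
  rcases h3 with ⟨h0, hz⟩ | ⟨h0, hz⟩
  · have h4 : τ (r + 1) = 1 := fin2_ne hne.symm (by rw [h0]; decide)
    rw [h0, h4] at h
    simp only [phi, sg] at h
    split_ifs at h <;> omega
  · have h4 : τ (r + 1) = 0 := fin2_ne hne.symm (by rw [h0]; decide)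
    rw [h0, h4] at h
    simp only [phi, sg] at h
    split_ifs at h <;> omega

lemma Red.length {n : ℕ} {τ₀ τ : ℕ → Fin 2} {w : List ℕ} (h : Red n τ₀ w τ) :
    pot n τ = pot n τ₀ + w.length := by
  induction h with
  | nil => simp
  | cons h1 h2 hd _ ih => rw [pot_desc h1 h2 hd, ih]; push_cast [List.length_cons]; ring

/-- A column word without descents continues in a constant direction after leaving the strip of
heights `0` and `1`. -/
lemma const_of_no_desc {n : ℕ} {τ : ℕ → Fin 2} (hτ : ∀ r, 1 ≤ r → r < n → ¬ Desc τ r) {p : ℕ}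
    {a : Fin 2} (hp : 1 ≤ p) (ha : τ p = a)
    (hz : (a = 0 ∧ 1 ≤ hgt τ (p - 1)) ∨ (a = 1 ∧ hgt τ (p - 1) ≤ 0)) (d : ℕ) (hd : p + d ≤ n) :
    τ (p + d) = a ∧ ((a = 0 ∧ 1 ≤ hgt τ (p + d - 1)) ∨ (a = 1 ∧ hgt τ (p + d - 1) ≤ 0)) := by
  induction d with
  | zero => exact ⟨ha, hz⟩
  | succ d ih =>
    obtain ⟨h1, h2⟩ := ih (by omega)
    have h3 := hτ (p + d) (by omega) (by omega)
    have h4 : τ (p + d + 1) = a := by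
      by_contra hne
      exact h3 ⟨by rw [h1]; exact fun h => hne h.symm, by rw [h1]; exact h2⟩
    refine ⟨h4, ?_⟩
    obtain ⟨s, hs⟩ : ∃ s, p + d = s + 1 := ⟨p + d - 1, by omega⟩
    rw [show p + (d + 1) - 1 = s + 1 by omega, hgt_succ, ← hs, h1]
    rw [hs, Nat.add_sub_cancel] at h2
    rcases h2 with ⟨rfl, h⟩ | ⟨rfl, h⟩
    · left; simp [sg]; omega
    · right; simp [sg]; omega

lemma cnt_mono (τ : ℕ → Fin 2) (a : Fin 2) {k k' : ℕ} (h : k ≤ k') : cnt τ a k ≤ cnt τ a k' := by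
  induction k', h using Nat.le_induction with
  | base => exact le_rfl
  | succ k' _ ih => exact ih.trans (by simp [cnt])

lemma cnt_const {τ : ℕ → Fin 2} {a b : Fin 2} (hab : a ≠ b) {k : ℕ} (d : ℕ)
    (h : ∀ i < d, τ (k + 1 + i) = b) : cnt τ a (k + d) = cnt τ a k := by
  induction d with
  | zero => rfl
  | succ d ih =>
    rw [← add_assoc, cnt, ih fun i hi => h i (by omega), if_neg, add_zero]
    rw [show k + d + 1 = k + 1 + d by ring, h d (by omega)]
    exact hab.symm

/-- If a descent-free word goes on with `a` outside of the strip, no other word with the same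
beginning and the same number of letters can go on differently. -/
lemma no_branch {n : ℕ} {τ τ' : ℕ → Fin 2} (hτ : ∀ r, 1 ≤ r → r < n → ¬ Desc τ r)
    {a b : Fin 2} (hab : b ≠ a) (hc : cnt τ b n = cnt τ' b n) {p : ℕ} (hp : 1 ≤ p) (hpn : p ≤ n)
    (hlt : ∀ j, 1 ≤ j → j < p → τ j = τ' j) (h1 : τ p = a) (h2 : τ' p = b)
    (hz : (a = 0 ∧ 1 ≤ hgt τ (p - 1)) ∨ (a = 1 ∧ hgt τ (p - 1) ≤ 0)) : False := by
  obtain ⟨s, rfl⟩ : ∃ s, p = s + 1 := ⟨p - 1, by omega⟩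
  have e1 := cnt_const (τ := τ) hab (k := s) (n - s) fun i hi =>
    (const_of_no_desc hτ hp h1 hz i (by omega)).1
  rw [Nat.add_sub_cancel' (by omega)] at e1
  have e2 : cnt τ' b (s + 1) = cnt τ b s + 1 := by
    rw [cnt, if_pos h2, cnt_congr s fun j h1 h2 => hlt j h1 (by omega)]
  have e3 := cnt_mono τ' b hpn
  omega

/-- There is at most one word without descents for each shape. -/
lemma eq_of_no_desc {n : ℕ} {τ τ' : ℕ → Fin 2} (hτ : ∀ r, 1 ≤ r → r < n → ¬ Desc τ r)
    (hτ' : ∀ r, 1 ≤ r → r < n → ¬ Desc τ' r) (hc : cnt τ 0 n = cnt τ' 0 n) (p : ℕ) :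
    1 ≤ p → p ≤ n → τ p = τ' p := by
  have hc' : cnt τ 1 n = cnt τ' 1 n := by
    have := cnt_add τ n; have := cnt_add τ' n; omega
  induction p using Nat.strong_induction_on with
  | _ p ih =>
    intro hp hpn
    have hlt : ∀ j, 1 ≤ j → j < p → τ j = τ' j := fun j h1 h2 => ih j h2 h1 (by omega)
    have hz : hgt τ (p - 1) = hgt τ' (p - 1) := hgt_congr _ fun j h1 h2 => hlt j h1 (by omega)
    have hlt' : ∀ j, 1 ≤ j → j < p → τ' j = τ j := fun j h1 h2 => (hlt j h1 h2).symm
    rcases fin2 (τ p) with h | h <;> rcases fin2 (τ' p) with h' | h'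
    · rw [h, h']
    · exfalso
      rcases lt_or_ge 0 (hgt τ (p - 1)) with h0 | h0
      · exact no_branch hτ (by decide) hc' hp hpn hlt h h' (Or.inl ⟨rfl, h0⟩)
      · exact no_branch hτ' (by decide) hc.symm hp hpn hlt' h' h (Or.inr ⟨rfl, by omega⟩)
    · exfalso
      rcases lt_or_ge 0 (hgt τ (p - 1)) with h0 | h0
      · exact no_branch hτ' (by decide) hc'.symm hp hpn hlt' h' h (Or.inl ⟨rfl, by omega⟩)
      · exact no_branch hτ (by decide) hc hp hpn hlt h h' (Or.inr ⟨rfl, by omega⟩)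
    · exact h.trans h'.symm

/-- `τ` and `τ₀` have the same letters up to order in positions `1, …, n` and agree elsewhere. -/
def SameShape (n : ℕ) (τ₀ τ : ℕ → Fin 2) : Prop :=
  cnt τ 0 n = cnt τ₀ 0 n ∧ ∀ j, ¬ (1 ≤ j ∧ j ≤ n) → τ j = τ₀ j

lemma SameShape.sw {n r : ℕ} {τ₀ τ : ℕ → Fin 2} (h : SameShape n τ₀ τ) (h1 : 1 ≤ r) (h2 : r < n) :
    SameShape n τ₀ (sw r τ) :=
  ⟨by rw [cnt_sw h1 τ 0 (by omega), h.1],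
    fun j hj => by rw [sw_other τ (by omega) (by omega), h.2 j hj]⟩

lemma exists_red {n : ℕ} {τ₀ : ℕ → Fin 2} (h0 : ∀ r, 1 ≤ r → r < n → ¬ Desc τ₀ r) (N : ℕ) :
    ∀ τ, SameShape n τ₀ τ → pot n τ ≤ N → ∃ w, Red n τ₀ w τ := by
  have key : ∀ τ, SameShape n τ₀ τ → (¬ ∃ r, 1 ≤ r ∧ r < n ∧ Desc τ r) → ∃ w, Red n τ₀ w τ := by
    intro τ hs hno
    have : τ = τ₀ := by
      funext j
      by_cases hj : 1 ≤ j ∧ j ≤ n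
      · exact eq_of_no_desc (fun r h1 h2 hd => hno ⟨r, h1, h2, hd⟩) h0 hs.1 j hj.1 hj.2
      · exact hs.2 j hj
    exact ⟨[], this ▸ Red.nil⟩
  induction N with
  | zero =>
    intro τ hs hN
    refine key τ hs ?_
    rintro ⟨r, h1, h2, hd⟩
    have := pot_desc h1 h2 hd
    have := pot_nonneg n (sw r τ)
    push_cast at hN; omega
  | succ N ih =>
    intro τ hs hN
    by_cases h : ∃ r, 1 ≤ r ∧ r < n ∧ Desc τ r
    · obtain ⟨r, h1, h2, hd⟩ := h
      have := pot_desc h1 h2 hd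
      obtain ⟨w, hw⟩ := ih (sw r τ) (hs.sw h1 h2) (by push_cast at hN; omega)
      exact ⟨r :: w, Red.cons h1 h2 hd hw⟩
    · exact key τ hs h

/-- The word `τ₀` has no descents in positions `1, …, n`; for its shape, it is then the word of the
dominant tableau (`eq_of_no_desc`). -/
def NoDesc (n : ℕ) (τ₀ : ℕ → Fin 2) : Prop := ∀ r, 1 ≤ r → r < n → ¬ Desc τ₀ r

lemma NoDesc.exists_red {n : ℕ} {τ₀ τ : ℕ → Fin 2} (h0 : NoDesc n τ₀) (hs : SameShape n τ₀ τ) :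
    ∃ w, Red n τ₀ w τ :=
  Blob.exists_red h0 (pot n τ).toNat τ hs (by have := pot_nonneg n τ; omega)

lemma Red.sameShape {n : ℕ} {τ₀ τ : ℕ → Fin 2} {w : List ℕ} (h : Red n τ₀ w τ) :
    SameShape n τ₀ τ := by
  induction h with
  | nil => exact ⟨rfl, fun _ _ => rfl⟩
  | @cons r w τ h1 h2 hd h ih => have := ih.sw h1 h2; rwa [sw_sw] at this

lemma Desc.sw {τ : ℕ → Fin 2} {r s : ℕ} (hr : 1 ≤ r) (h : r + 1 < s ∨ s + 1 < r) (hd : Desc τ s) :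
    Desc (sw r τ) s := by
  unfold Desc
  rw [sw_other τ (by omega) (by omega), sw_other τ (by omega) (by omega),
    hgt_sw hr τ (by omega)]
  exact hd

lemma not_desc_adj {τ : ℕ → Fin 2} {r : ℕ} (hr : 1 ≤ r) (h : Desc τ r) (h' : Desc τ (r + 1)) :
    False := by
  obtain ⟨s, rfl⟩ : ∃ s, r = s + 1 := ⟨r - 1, by omega⟩
  obtain ⟨a, b⟩ := h
  obtain ⟨a', b'⟩ := h'
  simp only [Nat.add_sub_cancel, hgt_succ] at b b'
  rcases b with ⟨h1, h2⟩ | ⟨h1, h2⟩ <;> rcases b' with ⟨h3, h4⟩ | ⟨h3, h4⟩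
  · exact a (h1.trans h3.symm)
  · simp [sg, h1] at h4; omega
  · simp [sg, h1] at h4; omega
  · exact a (h1.trans h3.symm)

variable {𝕜 : Type} [Field 𝕜] {n e : ℕ} {κ : ZMod e × ZMod e}

/-- The element `ψ_w` does not depend on the chosen sequence of descents: two different descents
are never adjacent, so only distant commutations are needed. -/
lemma Red.psi_unique {τ₀ : ℕ → Fin 2} (h0 : NoDesc n τ₀) (N : ℕ) : ∀ {τ : ℕ → Fin 2}
    {w w' : List ℕ}, w.length = N → Red n τ₀ w τ → Red n τ₀ w' τ →
    (psiWord 𝕜 κ w : BA 𝕜 n e κ) = psiWord 𝕜 κ w' := by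
  induction N with
  | zero =>
    intro τ w w' hl hw hw'
    have h1 := hw.length
    have h2 := hw'.length
    have h3 : w' = [] := List.length_eq_zero_iff.1 (by omega)
    rw [List.length_eq_zero_iff.1 hl, h3]
  | succ N ih =>
    intro τ w w' hl hw hw'
    have hlen : w.length = w'.length := by
      have h1 := hw.length
      have h2 := hw'.length
      omega
    cases hw with
    | nil => simp at hl
    | @cons r u _ h1 h2 hd hu =>
      cases hw' with
      | nil => simp at hlen
      | @cons r' u' _ h1' h2' hd' hu' =>
        simp only [List.length_cons] at hl hlen
        have hcons : ∀ s x, (psiWord 𝕜 κ (s :: x) : BA 𝕜 n e κ) = bpsi 𝕜 κ s * psiWord 𝕜 κ x :=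
          fun s x => by simp [psiWord]
        by_cases hrr : r = r'
        · subst hrr
          rw [hcons, hcons, ih (by omega) hu hu']
        · have hfar : r + 1 < r' ∨ r' + 1 < r := by
            by_contra hcon
            rcases (by omega : r' = r + 1 ∨ r = r' + 1) with rfl | rfl
            · exact not_desc_adj h1 hd hd'
            · exact not_desc_adj h1' hd' hd
          obtain ⟨x, hx⟩ := h0.exists_red ((hu.sameShape).sw h1' h2')
          have hx' : Red n τ₀ x (sw r (sw r' τ)) := by
            rcases hfar with h | h
            · rw [sw_comm h]; exact hx
            · rw [← sw_comm h]; exact hx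
          rw [hcons, hcons, ih (by omega) hu (Red.cons h1' h2' (hd'.sw h1 hfar) hx),
            ih (by omega) hu' (Red.cons h1 h2 (hd.sw h1' (by omega)) hx'), hcons, hcons,
            ← mul_assoc, ← mul_assoc, psi_comm hfar]

end Blob

namespace Blob

/-! ### Reduced expressions of tableaux -/

lemma tab_sPerm {n r : ℕ} (h1 : 1 ≤ r) (h2 : r < n) (τ : ℕ → Fin 2) (q : Fin n) :
    tab n τ (sPerm n r q) = tab n (sw r τ) q := by
  unfold tab sw
  rw [sPerm_val h1 h2]; rfl

lemma rowOf_sPerm {n r : ℕ} (h1 : 1 ≤ r) (h2 : r < n) {τ : ℕ → Fin 2} (h : τ r ≠ τ (r + 1))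
    (q : Fin n) : rowOf (tab n τ) (sPerm n r q) = rowOf (tab n (sw r τ)) q := by
  rw [rowOf_tab, rowOf_tab, sPerm_val h1 h2, pos_sw h1 h _ (by omega)]

lemma permOfWord_cons (n r : ℕ) (w : List ℕ) :
    permOfWord n (r :: w) = sPerm n r * permOfWord n w := by simp [permOfWord]

lemma Red.mem {n : ℕ} {τ₀ τ : ℕ → Fin 2} {w : List ℕ} (h : Red n τ₀ w τ) :
    ∀ r ∈ w, 1 ≤ r ∧ r < n := by
  induction h with
  | nil => simp
  | cons h1 h2 hd h ih =>
    intro s hs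
    rcases List.mem_cons.1 hs with rfl | hs
    · exact ⟨h1, h2⟩
    · exact ih s hs

lemma pot_le_length {n : ℕ} {τ' : ℕ → Fin 2} (w : List ℕ) : ∀ {τ : ℕ → Fin 2},
    (∀ r ∈ w, 1 ≤ r ∧ r < n) → (∀ p, tab n τ (permOfWord n w p) = tab n τ' p) →
    pot n τ ≤ pot n τ' + w.length := by
  induction w with
  | nil =>
    intro τ _ h
    have : pot n τ = pot n τ' := by
      refine Finset.sum_congr rfl fun k hk => ?_
      rw [hgt_congr k fun j h1 h2 => ?_]
      have hj := h ⟨j - 1, by have := Finset.mem_range.1 hk; omega⟩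
      simpa [permOfWord, tab, Nat.sub_add_cancel h1] using hj
    simp [this]
  | cons r w ih =>
    intro τ hm h
    obtain ⟨h1, h2⟩ := hm r (by simp)
    have := ih (τ := sw r τ) (fun s hs => hm s (by simp [hs])) fun p => by
      rw [← h p, permOfWord_cons, Equiv.Perm.mul_apply, tab_sPerm h1 h2]
    have := pot_le h1 h2 τ
    push_cast [List.length_cons]
    omega

/-- A sequence of descents is a reduced expression of the permutation of the tableau. -/
lemma Red.isRedWord {n : ℕ} {τ₀ τ : ℕ → Fin 2} {w : List ℕ} (h : Red n τ₀ w τ) :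
    IsRedWordForTab (tab n τ₀) (tab n τ) w := by
  have hd : IsDTabPerm (tab n τ₀) (tab n τ) (permOfWord n w) := by
    induction h with
    | nil => intro p; simp [permOfWord]
    | cons h1 h2 hd h ih =>
      intro p
      rw [permOfWord_cons, Equiv.Perm.mul_apply, tab_sPerm h1 h2, rowOf_sPerm h1 h2 hd.1]
      exact ih p
  refine ⟨permOfWord n w, hd, h.mem, rfl, fun w' hm hw' => ?_⟩
  have := pot_le_length w' (τ := τ) (τ' := τ₀) hm fun p => by rw [hw']; exact (hd p).1
  have := h.length
  omega

/-! ### The vectors attached to tableaux -/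

section Vectors

variable {𝕜 : Type} [Field 𝕜] {n e : ℕ} {κ : ZMod e × ZMod e}

lemma Wt.congr {ω ω' : ℕ → ZMod e} {v : BA 𝕜 n e κ} (hv : Wt ω v) (h : ∀ p, 1 ≤ p → ω p = ω' p) :
    Wt ω' v := by
  have : seqOf n ω' = seqOf n ω := by
    funext p; exact (h (p + 1) (by omega)).symm
  unfold Wt; rw [this]; exact hv

open Classical in
/-- The element `ψ_{d_τ} e(i^{τ₀})` for the tableau with column word `τ`, where `τ₀` is the column
word of the dominant tableau (and the junk value `0` if `τ` and `τ₀` have different shapes). -/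
def Vel (𝕜 : Type) [Field 𝕜] {e : ℕ} (κ : ZMod e × ZMod e) (n : ℕ) (τ₀ τ : ℕ → Fin 2) :
    BA 𝕜 n e κ :=
  if h : ∃ w, Red n τ₀ w τ then psiWord 𝕜 κ h.choose * bE 𝕜 κ (seqOf n (rs κ τ₀)) else 0

variable {τ₀ : ℕ → Fin 2}

lemma Vel_eq (h0 : NoDesc n τ₀) {τ : ℕ → Fin 2} {w : List ℕ} (h : Red n τ₀ w τ) :
    Vel 𝕜 κ n τ₀ τ = psiWord 𝕜 κ w * bE 𝕜 κ (seqOf n (rs κ τ₀)) := by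
  have h' : ∃ w, Red n τ₀ w τ := ⟨w, h⟩
  rw [Vel, dif_pos h', Red.psi_unique h0 _ rfl h'.choose_spec h]

lemma Vel_wt (h0 : NoDesc n τ₀) {τ : ℕ → Fin 2} (hs : SameShape n τ₀ τ) :
    Wt (rs κ τ) (Vel 𝕜 κ n τ₀ τ) := by
  obtain ⟨w, hw⟩ := h0.exists_red hs
  rw [Vel_eq h0 hw]
  clear hs
  induction hw with
  | nil =>
    simp only [Wt, psiWord, List.map_nil, List.prod_nil, one_mul]
    exact bE_idem
  | @cons r w τ h1 h2 hd hw ih =>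
    have h := ih.psi h1 h2
    have e1 : psiWord 𝕜 κ (r :: w) * bE 𝕜 κ (seqOf n (rs κ τ₀)) =
        bpsi 𝕜 κ r * (psiWord 𝕜 κ w * bE 𝕜 κ (seqOf n (rs κ τ₀))) := by
      simp [psiWord, mul_assoc]
    rw [e1]
    refine h.congr fun p hp => ?_
    have hq : 1 ≤ Equiv.swap r (r + 1) p := by
      rw [Equiv.swap_apply_def]; split_ifs <;> omega
    rw [Function.comp, rs_sw κ h1 hd.1 hq, Function.comp, Equiv.swap_apply_self]

lemma Vel_desc (h0 : NoDesc n τ₀) {τ : ℕ → Fin 2} (hs : SameShape n τ₀ τ) {r : ℕ} (h1 : 1 ≤ r)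
    (h2 : r < n) (hd : Desc τ r) : Vel 𝕜 κ n τ₀ τ = bpsi 𝕜 κ r * Vel 𝕜 κ n τ₀ (sw r τ) := by
  obtain ⟨w, hw⟩ := h0.exists_red (hs.sw h1 h2)
  rw [Vel_eq h0 hw, Vel_eq h0 (Red.cons h1 h2 hd hw)]
  simp [psiWord, mul_assoc]

/-- A crossing of a strand of column `a` with a later strand of the other column at height `z` can
be split off on the left: either it is a descent, or its residues are distant. -/
def Gd {e : ℕ} (κ : ZMod e × ZMod e) (a : Fin 2) (z : ℤ) : Prop :=
  (a = 0 ∧ 1 ≤ z) ∨ (a = 1 ∧ z ≤ 0) ∨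
    (κ.1 - κ.2 - (z : ZMod e) ≠ 0 ∧ κ.1 - κ.2 - (z : ZMod e) ≠ 1 ∧ κ.1 - κ.2 - (z : ZMod e) ≠ -1)

/-- For distant residues `ψ_r² = 1`, so `ψ_r` also splits off at an ascent. -/
lemma Vel_step (h0 : NoDesc n τ₀) {τ : ℕ → Fin 2} (hs : SameShape n τ₀ τ) {r : ℕ} (h1 : 1 ≤ r)
    (h2 : r < n) (hne : τ r ≠ τ (r + 1)) (hg : Gd κ (τ r) (hgt τ (r - 1))) :
    Vel 𝕜 κ n τ₀ τ = bpsi 𝕜 κ r * Vel 𝕜 κ n τ₀ (sw r τ) := by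
  by_cases hd : Desc τ r
  · exact Vel_desc h0 hs h1 h2 hd
  have hfar : Far (rs κ τ r) (rs κ τ (r + 1)) := by
    obtain ⟨s, rfl⟩ : ∃ s, r = s + 1 := ⟨r - 1, by omega⟩
    rcases hg with hg | hg | ⟨g1, g2, g3⟩
    · exact absurd ⟨hne, Or.inl hg⟩ hd
    · exact absurd ⟨hne, Or.inr hg⟩ hd
    have hp : pos τ (s + 1 + 1) = cnt τ (τ (s + 1 + 1)) s := by
      rw [pos, Nat.add_sub_cancel, cnt, if_neg hne, add_zero]
    simp only [rs, hp]
    rw [pos]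
    simp only [Nat.add_sub_cancel, hgt] at g1 g2 g3 ⊢
    push_cast at g1 g2 g3
    rcases fin2 (τ (s + 1)) with h | h
    · have h' : τ (s + 1 + 1) = 1 := fin2_ne hne.symm (by rw [h]; decide)
      rw [h, h']
      simp only [kk, if_true]
      rw [if_neg (by decide)]
      refine ⟨fun h => g1 ?_, fun h => g3 ?_, fun h => g2 ?_⟩ <;> linear_combination -h
    · have h' : τ (s + 1 + 1) = 0 := fin2_ne hne.symm (by rw [h]; decide)
      rw [h, h']
      simp only [kk, if_true]
      rw [if_neg (by decide)]
      refine ⟨fun h => g1 ?_, fun h => g2 ?_, fun h => g3 ?_⟩ <;> linear_combination h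
  have hd' : Desc (sw r τ) r := by
    refine ⟨by rw [sw_left, sw_right]; exact hne.symm, ?_⟩
    rw [sw_left, hgt_sw h1 τ (by omega)]
    rcases fin2 (τ r) with h | h
    · have h' : τ (r + 1) = 1 := fin2_ne hne.symm (by rw [h]; decide)
      refine Or.inr ⟨h', ?_⟩
      by_contra hcon
      exact hd ⟨hne, Or.inl ⟨h, by omega⟩⟩
    · have h' : τ (r + 1) = 0 := fin2_ne hne.symm (by rw [h]; decide)
      refine Or.inl ⟨h', ?_⟩
      by_contra hcon
      exact hd ⟨hne, Or.inr ⟨h, by omega⟩⟩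
  have := Vel_desc (𝕜 := 𝕜) (κ := κ) h0 (hs.sw h1 h2) h1 h2 hd'
  rw [sw_sw] at this
  rw [this, quad_far (Vel_wt h0 hs) h1 h2 hfar]

end Vectors
end Blob

namespace Blob

/-! ### Moving blocks of steps past each other -/

variable {𝕜 : Type} [Field 𝕜] {n e : ℕ} {κ : ZMod e × ZMod e} {τ₀ : ℕ → Fin 2}

lemma sg_ne {a b : Fin 2} (h : b ≠ a) : sg b = - sg a := by
  rcases fin2 a with rfl | rfl <;> rcases fin2 b with rfl | rfl <;> simp_all [sg]

lemma hgt_run {τ : ℕ → Fin 2} {a : Fin 2} (g p : ℕ) (h : ∀ q, g < q → q ≤ g + p → τ q = a) :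
    hgt τ (g + p) = hgt τ g + sg a * p := by
  induction p with
  | zero => simp
  | succ p ih =>
    rw [← add_assoc, hgt_succ, ih fun q h1 h2 => h q h1 (by omega), h (g + p + 1) (by omega) (by omega)]
    push_cast; ring

/-- A single step of one direction moves to the right past `p` steps of the other direction. -/
lemma move_up (h0 : NoDesc n τ₀) {α β : Fin 2} (hβ : β ≠ α) {τ' : ℕ → Fin 2} (p : ℕ) :
    ∀ {r : ℕ} {τ : ℕ → Fin 2}, SameShape n τ₀ τ → 1 ≤ r → r + p ≤ n → τ r = α →
    (∀ q, r < q → q ≤ r + p → τ q = β) → (∀ q, r ≤ q → q < r + p → τ' q = β) → τ' (r + p) = α →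
    (∀ q, q < r ∨ r + p < q → τ q = τ' q) →
    (∀ i : ℕ, i < p → Gd κ α (hgt τ (r - 1) - sg α * i)) →
    SameShape n τ₀ τ' ∧ Vel 𝕜 κ n τ₀ τ = upE 𝕜 κ r p * Vel 𝕜 κ n τ₀ τ' := by
  induction p with
  | zero =>
    intro r τ hs h1 h2 ha hb hb' ha' ho hg
    have : τ = τ' := by
      funext q
      rcases Nat.lt_trichotomy q r with h | h | h
      · exact ho q (Or.inl h)
      · subst h; rw [ha]; exact ha'.symm
      · exact ho q (Or.inr h)
    subst this
    exact ⟨hs, by simp [upE]⟩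
  | succ p ih =>
    intro r τ hs h1 h2 ha hb hb' ha' ho hg
    have hb1 : τ (r + 1) = β := hb _ (by omega) (by omega)
    have key := ih (r := r + 1) (τ := sw r τ) (hs.sw h1 (by omega)) (by omega) (by omega)
      (by rw [sw_right, ha])
      (fun q h3 h4 => by rw [sw_other _ (by omega) (by omega)]; exact hb q (by omega) (by omega))
      (fun q h3 h4 => hb' q (by omega) (by omega))
      (by rw [← ha']; congr 1; omega)
      (fun q h3 => by
        by_cases h4 : q = r
        · subst h4; rw [sw_left, hb1, hb' q le_rfl (by omega)]
        · rw [sw_other _ h4 (by omega)]; exact ho q (by omega))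
      (fun i hi => by
        obtain ⟨s, rfl⟩ : ∃ s, r = s + 1 := ⟨r - 1, by omega⟩
        have := hg (i + 1) (by omega)
        simp only [Nat.add_sub_cancel] at this ⊢
        rw [hgt_succ, sw_left, hb1, hgt_sw h1 τ (by omega), sg_ne hβ]
        convert this using 1
        push_cast; ring)
    refine ⟨key.1, ?_⟩
    rw [Vel_step h0 hs h1 (by omega) (by rw [ha, hb1]; exact hβ.symm)
      (by rw [ha]; simpa using hg 0 (by omega)), key.2, upE, mul_assoc]

/-- A block of `p` equal steps moves to the right past one step of the other direction. -/
lemma move_dn (h0 : NoDesc n τ₀) {α β : Fin 2} (hβ : β ≠ α) {τ' : ℕ → Fin 2} (p : ℕ) :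
    ∀ {r : ℕ} {τ : ℕ → Fin 2}, SameShape n τ₀ τ → 1 ≤ r → r + p ≤ n → τ (r + p) = β →
    (∀ q, r ≤ q → q < r + p → τ q = α) → (∀ q, r < q → q ≤ r + p → τ' q = α) → τ' r = β →
    (∀ q, q < r ∨ r + p < q → τ q = τ' q) →
    (∀ i : ℕ, i < p → Gd κ α (hgt τ (r - 1) + sg α * i)) →
    SameShape n τ₀ τ' ∧ Vel 𝕜 κ n τ₀ τ = dnE 𝕜 κ r p * Vel 𝕜 κ n τ₀ τ' := by
  induction p with
  | zero =>
    intro r τ hs h1 h2 hb ha ha' hb' ho hg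
    have : τ = τ' := by
      funext q
      rcases Nat.lt_trichotomy q r with h | h | h
      · exact ho q (Or.inl h)
      · subst h; rw [hb']; exact hb
      · exact ho q (Or.inr h)
    subst this
    exact ⟨hs, by simp [dnE]⟩
  | succ p ih =>
    intro r τ hs h1 h2 hb ha ha' hb' ho hg
    have ha1 : τ (r + p) = α := ha _ (by omega) (by omega)
    have hb1 : τ (r + p + 1) = β := hb
    have key := ih (r := r) (τ := sw (r + p) τ) (hs.sw (by omega) (by omega)) h1 (by omega)
      (by rw [sw_left, hb1])
      (fun q h3 h4 => by rw [sw_other _ (by omega) (by omega)]; exact ha q (by omega) (by omega))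
      (fun q h3 h4 => ha' q (by omega) (by omega)) hb'
      (fun q h3 => by
        by_cases h4 : q = r + p + 1
        · subst h4; rw [sw_right, ha1, ha' _ (by omega) (by omega)]
        · rw [sw_other _ (by omega) h4]; exact ho q (by omega))
      (fun i hi => by
        rw [hgt_sw (by omega) τ (by omega)]
        exact hg i (by omega))
    refine ⟨key.1, ?_⟩
    rw [Vel_step h0 hs (r := r + p) (by omega) (by omega) (by rw [ha1, hb1]; exact hβ.symm) ?_,
      key.2, dnE_succ_left, mul_assoc]
    rw [ha1]
    obtain ⟨s, rfl⟩ : ∃ s, r = s + 1 := ⟨r - 1, by omega⟩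
    have := hg p (by omega)
    rw [show s + 1 + p - 1 = s + p by omega, hgt_run s p fun q h3 h4 => ha q (by omega) (by omega)]
    simpa using this

/-- The word equal to `τ` outside the window `(g, g + 2k]`, where it is `α^k β^k`. -/
def blk (τ : ℕ → Fin 2) (g k : ℕ) (α β : Fin 2) : ℕ → Fin 2 := fun q =>
  if g < q ∧ q ≤ g + k then α else if g + k < q ∧ q ≤ g + 2 * k then β else τ q

lemma blk_out {τ : ℕ → Fin 2} {g k : ℕ} {α β : Fin 2} {q : ℕ} (h : q ≤ g ∨ g + 2 * k < q) :
    blk τ g k α β q = τ q := by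
  unfold blk; rw [if_neg (by omega), if_neg (by omega)]

lemma blk_fst {τ : ℕ → Fin 2} {g k : ℕ} {α β : Fin 2} {q : ℕ} (h1 : g < q) (h2 : q ≤ g + k) :
    blk τ g k α β q = α := by
  unfold blk; rw [if_pos ⟨h1, h2⟩]

lemma blk_snd {τ : ℕ → Fin 2} {g k : ℕ} {α β : Fin 2} {q : ℕ} (h1 : g + k < q)
    (h2 : q ≤ g + 2 * k) : blk τ g k α β q = β := by
  unfold blk; rw [if_neg (by omega), if_pos ⟨h1, h2⟩]

/-- The word equal to `τ` outside `(g, g + 2k + 2]`, where it is `α^k β^k a b`. -/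
def blk2 (τ : ℕ → Fin 2) (g k : ℕ) (α β a b : Fin 2) : ℕ → Fin 2 :=
  blk (blk τ (g + 2 * k) 1 a b) g k α β

lemma blk2_a {τ : ℕ → Fin 2} {g k : ℕ} {α β a b : Fin 2} :
    blk2 τ g k α β a b (g + 2 * k + 1) = a := by
  unfold blk2; rw [blk_out (by omega), blk_fst (by omega) (by omega)]

lemma blk2_b {τ : ℕ → Fin 2} {g k : ℕ} {α β a b : Fin 2} :
    blk2 τ g k α β a b (g + 2 * k + 2) = b := by
  unfold blk2; rw [blk_out (by omega), blk_snd (by omega) (by omega)]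

lemma blk2_out {τ : ℕ → Fin 2} {g k : ℕ} {α β a b : Fin 2} {q : ℕ}
    (h : q ≤ g ∨ g + 2 * k + 2 < q) : blk2 τ g k α β a b q = τ q := by
  unfold blk2; rw [blk_out (by omega), blk_out (by omega)]

lemma blk2_fst {τ : ℕ → Fin 2} {g k : ℕ} {α β a b : Fin 2} {q : ℕ} (h1 : g < q) (h2 : q ≤ g + k) :
    blk2 τ g k α β a b q = α := blk_fst h1 h2

lemma blk2_snd {τ : ℕ → Fin 2} {g k : ℕ} {α β a b : Fin 2} {q : ℕ} (h1 : g + k < q)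
    (h2 : q ≤ g + 2 * k) : blk2 τ g k α β a b q = β := blk_snd h1 h2

/-- The move `α^(k+1) β^(k+1) → α^k β^k α β`. -/
lemma move_up' (h0 : NoDesc n τ₀) {α β : Fin 2} (hβ : β ≠ α) {τ : ℕ → Fin 2} {g k : ℕ}
    (hs : SameShape n τ₀ τ) (hn : g + 2 * (k + 1) ≤ n)
    (ha : ∀ q, g < q → q ≤ g + (k + 1) → τ q = α)
    (hb : ∀ q, g + (k + 1) < q → q ≤ g + 2 * (k + 1) → τ q = β)
    (hg : ∀ d : ℤ, 0 < d → d ≤ k → Gd κ α (hgt τ g + sg α * d)) :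
    SameShape n τ₀ (blk2 τ g k α β α β) ∧
      Vel 𝕜 κ n τ₀ τ = upE 𝕜 κ (g + k + 1) k * Vel 𝕜 κ n τ₀ (blk2 τ g k α β α β) := by
  refine move_up h0 hβ k hs (by omega) (by omega) (ha _ (by omega) (by omega))
    (fun q h1 h2 => hb q (by omega) (by omega))
    (fun q h1 h2 => blk2_snd (by omega) (by omega)) ?_ ?_ ?_
  · rw [show g + k + 1 + k = g + 2 * k + 1 by omega, blk2_a]
  · intro q hq
    by_cases h1 : q ≤ g ∨ g + 2 * k + 2 < q
    · rw [blk2_out h1]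
    · by_cases h2 : q ≤ g + k
      · rw [blk2_fst (by omega) h2, ha q (by omega) (by omega)]
      · obtain rfl : q = g + 2 * k + 2 := by omega
        rw [blk2_b, hb _ (by omega) (by omega)]
  · intro i hi
    rw [Nat.add_sub_cancel, hgt_run g k fun q h1 h2 => ha q h1 (by omega)]
    convert hg (k - i) (by omega) (by omega) using 1
    ring

/-- The middle exchange `X α β → X β α` between the two last letters of a window. -/
lemma move_mid (h0 : NoDesc n τ₀) {α β : Fin 2} (hβ : β ≠ α) {τ : ℕ → Fin 2} {g k : ℕ}
    (hs : SameShape n τ₀ (blk2 τ g k β α α β)) (hn : g + 2 * (k + 1) ≤ n)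
    (hg : Gd κ α (hgt τ g)) :
    SameShape n τ₀ (blk2 τ g k β α β α) ∧
      Vel 𝕜 κ n τ₀ (blk2 τ g k β α α β) =
        bpsi 𝕜 κ (g + 2 * k + 1) * Vel 𝕜 κ n τ₀ (blk2 τ g k β α β α) := by
  have hsw : sw (g + 2 * k + 1) (blk2 τ g k β α α β) = blk2 τ g k β α β α := by
    funext q
    by_cases h1 : q = g + 2 * k + 1
    · subst h1; rw [sw_left, blk2_a, blk2_b]
    · by_cases h2 : q = g + 2 * k + 2
      · subst h2; rw [sw_right, blk2_a, blk2_b]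
      · rw [sw_other _ h1 (by omega)]
        unfold blk2 blk
        split_ifs <;> first | rfl | omega
  have hh : hgt (blk2 τ g k β α α β) (g + 2 * k) = hgt τ g := by
    rw [show g + 2 * k = g + k + k by omega,
      hgt_run (g + k) k fun q h1 h2 => blk2_snd h1 (by omega),
      hgt_run g k fun q h1 h2 => blk2_fst h1 (by omega), sg_ne hβ,
      hgt_congr (τ' := τ) g fun j _ h => blk2_out (Or.inl h)]
    ring
  have := hs.sw (r := g + 2 * k + 1) (by omega) (by omega)
  rw [hsw] at this
  refine ⟨this, ?_⟩
  rw [Vel_step h0 hs (r := g + 2 * k + 1) (by omega) (by omega)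
    (by rw [blk2_a, blk2_b]; exact hβ.symm)
    (by rw [blk2_a, Nat.add_sub_cancel, hh]; exact hg), hsw]

/-- The move `α^k β^k → β^k α^k` is realised by the diamond of size `k`. -/
lemma move_dia (h0 : NoDesc n τ₀) {α β : Fin 2} (hβ : β ≠ α) {g : ℕ} (k : ℕ) :
    ∀ {τ : ℕ → Fin 2}, SameShape n τ₀ τ → g + 2 * k ≤ n →
    (∀ q, g < q → q ≤ g + k → τ q = α) → (∀ q, g + k < q → q ≤ g + 2 * k → τ q = β) →
    (∀ d : ℤ, -(k : ℤ) < d → d < k → Gd κ α (hgt τ g + sg α * d)) →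
    SameShape n τ₀ (blk τ g k β α) ∧
      Vel 𝕜 κ n τ₀ τ = dia 𝕜 κ g k * Vel 𝕜 κ n τ₀ (blk τ g k β α) := by
  induction k with
  | zero =>
    intro τ hs hn ha hb hg
    have : blk τ g 0 β α = τ := by
      funext q
      unfold blk
      rw [if_neg (by omega), if_neg (by omega)]
    rw [this]
    exact ⟨hs, by simp [dia]⟩
  | succ k ih =>
    intro τ hs hn ha hb hg
    have m1 := move_up' (𝕜 := 𝕜) (κ := κ) h0 hβ hs hn ha hb fun d h1 h2 =>
      hg d (by omega) (by push_cast; omega)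
    have hh : hgt (blk2 τ g k α β α β) g = hgt τ g :=
      hgt_congr g fun j _ h => blk2_out (Or.inl h)
    have m2 := ih m1.1 (by omega) (fun q h1 h2 => blk2_fst h1 h2) (fun q h1 h2 => blk2_snd h1 h2)
      (fun d h1 h2 => by rw [hh]; exact hg d (by push_cast; omega) (by push_cast; omega))
    have e2 : blk (blk2 τ g k α β α β) g k β α = blk2 τ g k β α α β := by
      funext q; unfold blk2 blk; split_ifs <;> rfl
    rw [e2] at m2
    have m3 := move_mid (𝕜 := 𝕜) (κ := κ) h0 hβ m2.1 hn
      (by simpa using hg 0 (by omega) (by omega))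
    have m4 := move_dn (𝕜 := 𝕜) (κ := κ) h0 hβ (τ' := blk τ g (k + 1) β α) k
      (r := g + k + 1) m3.1 (by omega) (by omega)
      (by rw [show g + k + 1 + k = g + 2 * k + 1 by omega, blk2_a])
      (fun q h1 h2 => blk2_snd (by omega) (by omega))
      (fun q h1 h2 => blk_snd (by omega) (by omega))
      (blk_fst (by omega) (by omega))
      (fun q hq => by
        by_cases h1 : q ≤ g ∨ g + 2 * k + 2 < q
        · rw [blk2_out h1, blk_out (by omega)]
        · by_cases h2 : q ≤ g + k
          · rw [blk2_fst (by omega) h2, blk_fst (by omega) (by omega)]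
          · obtain rfl : q = g + 2 * k + 2 := by omega
            rw [blk2_b, blk_snd (by omega) (by omega)])
      (fun i hi => by
        rw [Nat.add_sub_cancel, hgt_run g k fun q h1 h2 => blk2_fst h1 h2,
          hgt_congr (τ' := τ) g fun j _ h => blk2_out (Or.inl h), sg_ne hβ]
        convert hg (i - k) (by push_cast; omega) (by push_cast; omega) using 1
        ring)
    refine ⟨m4.1, ?_⟩
    rw [m1.2, m2.2, m3.2, m4.2, dia]
    simp only [mul_assoc]

/-- The move `α^(k+1) β^(k+1) → β^k α^k β α` is realised by the truncated diamond `topE`. -/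
lemma move_top (h0 : NoDesc n τ₀) {α β : Fin 2} (hβ : β ≠ α) {g k : ℕ} (hk : 1 ≤ k)
    {τ : ℕ → Fin 2} (hs : SameShape n τ₀ τ) (hn : g + 2 * (k + 1) ≤ n)
    (ha : ∀ q, g < q → q ≤ g + (k + 1) → τ q = α)
    (hb : ∀ q, g + (k + 1) < q → q ≤ g + 2 * (k + 1) → τ q = β)
    (hg : ∀ d : ℤ, -(k : ℤ) < d → d ≤ k → Gd κ α (hgt τ g + sg α * d)) :
    SameShape n τ₀ (blk2 τ g k β α β α) ∧
      Vel 𝕜 κ n τ₀ τ = topE 𝕜 κ g k * Vel 𝕜 κ n τ₀ (blk2 τ g k β α β α) := by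
  have m1 := move_up' (𝕜 := 𝕜) (κ := κ) h0 hβ hs hn ha hb fun d h1 h2 =>
    hg d (by omega) (by omega)
  have hh : hgt (blk2 τ g k α β α β) g = hgt τ g :=
    hgt_congr g fun j _ h => blk2_out (Or.inl h)
  have m2 := move_dia (𝕜 := 𝕜) (κ := κ) h0 hβ k m1.1 (by omega) (fun q h1 h2 => blk2_fst h1 h2)
    (fun q h1 h2 => blk2_snd h1 h2)
    (fun d h1 h2 => by rw [hh]; exact hg d (by omega) (by omega))
  have e2 : blk (blk2 τ g k α β α β) g k β α = blk2 τ g k β α α β := by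
    funext q; unfold blk2 blk; split_ifs <;> rfl
  rw [e2] at m2
  have m3 := move_mid (𝕜 := 𝕜) (κ := κ) h0 hβ m2.1 hn (by simpa using hg 0 (by omega) (by omega))
  refine ⟨m3.1, ?_⟩
  rw [m1.2, m2.2, m3.2, topE]
  simp only [mul_assoc]

lemma cnt_run {τ : ℕ → Fin 2} {a : Fin 2} (g p : ℕ) (h : ∀ q, g < q → q ≤ g + p → τ q = a) :
    cnt τ a (g + p) = cnt τ a g + p := by
  induction p with
  | zero => simp
  | succ p ih =>
    rw [← add_assoc, cnt, ih fun q h1 h2 => h q h1 (by omega), if_pos (h _ (by omega) (by omega))]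
    omega

lemma cnt_run_ne {τ : ℕ → Fin 2} {a b : Fin 2} (hab : b ≠ a) (g p : ℕ)
    (h : ∀ q, g < q → q ≤ g + p → τ q = b) : cnt τ a (g + p) = cnt τ a g := by
  induction p with
  | zero => simp
  | succ p ih =>
    rw [← add_assoc, cnt, ih fun q h1 h2 => h q h1 (by omega),
      if_neg (by rw [h _ (by omega) (by omega)]; exact hab), add_zero]

/-- At a wall the two columns have addable boxes of the same residue. -/
lemma kk_wall {τ : ℕ → Fin 2} {g : ℕ} (hw : κ.1 - κ.2 = (hgt τ g : ZMod e)) (a b : Fin 2) :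
    kk κ a - (cnt τ a g : ZMod e) = kk κ b - (cnt τ b g : ZMod e) := by
  have h : kk κ 0 - (cnt τ 0 g : ZMod e) = kk κ 1 - (cnt τ 1 g : ZMod e) := by
    have : ((hgt τ g : ℤ) : ZMod e) = (cnt τ 0 g : ZMod e) - (cnt τ 1 g : ZMod e) := by
      unfold hgt; push_cast; ring
    rw [this] at hw
    simp only [kk]
    simp
    linear_combination hw
  rcases fin2 a with rfl | rfl <;> rcases fin2 b with rfl | rfl <;> first | rfl | exact h | exact h.symm

lemma rs_blk2 {τ : ℕ → Fin 2} {g k : ℕ} {α β : Fin 2} (hβ : β ≠ α)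
    (hw : κ.1 - κ.2 = (hgt τ g : ZMod e)) :
    PatMid k g (kk κ β - (cnt τ β g : ZMod e)) (rs κ (blk2 τ g k β α β α)) := by
  set σ := blk2 τ g k β α β α with hσ
  have c0 : ∀ a, cnt σ a g = cnt τ a g := fun a => cnt_congr g fun j _ h => blk2_out (Or.inl h)
  have hw' := kk_wall (τ := τ) (g := g) hw β α
  have b1 : ∀ x, x ≤ k → cnt σ β (g + x) = cnt τ β g + x := fun x hx => by
    rw [cnt_run g x fun q h1 h2 => blk2_fst h1 (by omega), c0]
  have a1 : cnt σ α (g + k) = cnt τ α g := by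
    rw [cnt_run_ne hβ g k fun q h1 h2 => blk2_fst h1 (by omega), c0]
  have a2 : ∀ x, x ≤ k → cnt σ α (g + k + x) = cnt τ α g + x := fun x hx => by
    rw [cnt_run (g + k) x fun q h1 h2 => blk2_snd h1 (by omega), a1]
  have b2 : cnt σ β (g + k + k) = cnt τ β g + k := by
    rw [cnt_run_ne hβ.symm (g + k) k fun q h1 h2 => blk2_snd h1 (by omega), b1 k le_rfl]
  have e1 : σ (g + 2 * k + 1) = β := blk2_a
  have e2 : σ (g + 2 * k + 2) = α := blk2_b
  refine ⟨fun x hx => ⟨?_, ?_⟩, ?_, ?_⟩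
  · have h : σ (g + 1 + x) = β := blk2_fst (by omega) (by omega)
    unfold rs pos
    rw [h, show g + 1 + x - 1 = g + x by omega, b1 x (by omega)]
    push_cast; ring
  · have h : σ (g + k + 1 + x) = α := blk2_snd (by omega) (by omega)
    unfold rs pos
    rw [h, show g + k + 1 + x - 1 = g + k + x by omega, a2 x (by omega), hw']
    push_cast; ring
  · unfold rs pos
    rw [e1, show g + 2 * k + 1 - 1 = g + k + k by omega, b2]
    push_cast; ring
  · unfold rs pos
    rw [e2, show g + 2 * k + 2 - 1 = g + k + k + 1 by omega, cnt,
      show g + k + k + 1 = g + 2 * k + 1 by omega, e1, if_neg hβ, a2 k le_rfl, hw']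
    push_cast; ring

end Blob

namespace Blob

/-! ### Absorption by a diamond at a turning point -/

variable {𝕜 : Type} [Field 𝕜] {n e : ℕ} {κ : ZMod e × ZMod e} {τ₀ : ℕ → Fin 2}

lemma intCast_ne {d x : ℤ} (h1 : x < d) (h2 : d < x + e) : (d : ZMod e) ≠ (x : ZMod e) := by
  intro h
  rw [ZMod.intCast_eq_intCast_iff_dvd_sub] at h
  obtain ⟨k, hk⟩ := h
  have : k < 0 := by
    by_contra hk0
    have : 0 ≤ (e : ℤ) * k := mul_nonneg (by positivity) (by omega)
    omega
  have : (e : ℤ) * k ≤ (e : ℤ) * (-1) := mul_le_mul_of_nonneg_left (by omega) (by positivity)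
  omega

lemma Far_int {d : ℤ} (h1 : 2 ≤ d) (h2 : d + 2 ≤ e) :
    (d : ZMod e) ≠ 0 ∧ (d : ZMod e) ≠ 1 ∧ (d : ZMod e) ≠ -1 := by
  refine ⟨?_, ?_, ?_⟩
  · simpa using intCast_ne (e := e) (d := d) (x := 0) (by omega) (by omega)
  · simpa using intCast_ne (e := e) (d := d) (x := 1) (by omega) (by omega)
  · simpa using intCast_ne (e := e) (d := d) (x := -1) (by omega) (by omega)

/-- Near a wall on or beyond the boundary of the fundamental alcove, every exchange needed to fold
back a turning point that faces away from the origin is admissible. -/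
lemma Gd_wall {c : ℕ} (hc : (c : ZMod e) = κ.1 - κ.2) (hc1 : 2 ≤ c) (hc2 : c + 2 ≤ e)
    {α : Fin 2} {q z d : ℤ} (hq : (α = 0 ∧ 0 ≤ q) ∨ (α = 1 ∧ q ≤ -1)) (hz : z = c + e * q)
    (hd : -(e : ℤ) + 1 < d) : Gd κ α (z + sg α * d) := by
  have hzc : (z : ZMod e) = κ.1 - κ.2 := by rw [hz, ← hc]; push_cast; simp
  rcases hq with ⟨rfl, hq⟩ | ⟨rfl, hq⟩
  · have : 0 ≤ (e : ℤ) * q := mul_nonneg (by positivity) hq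
    rcases lt_or_ge d (-1) with h | h
    · right; right
      have : κ.1 - κ.2 - ((z + sg 0 * d : ℤ) : ZMod e) = ((-d : ℤ) : ZMod e) := by
        push_cast; rw [hzc]; simp [sg]
      rw [this]
      exact Far_int (by omega) (by omega)
    · left
      refine ⟨rfl, ?_⟩
      simp only [sg, if_true]; omega
  · have : (e : ℤ) * q ≤ (e : ℤ) * (-1) := mul_le_mul_of_nonneg_left hq (by positivity)
    have hsg : sg 1 = -1 := by simp [sg]
    rcases lt_or_ge d (-1) with h | h
    · right; right
      have : κ.1 - κ.2 - ((z + sg 1 * d : ℤ) : ZMod e) = ((d : ℤ) : ZMod e) := by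
        push_cast; rw [hzc, hsg]; push_cast; ring
      rw [this]
      have := Far_int (e := e) (d := -d) (by omega) (by omega)
      push_cast at this
      refine ⟨?_, ?_, ?_⟩
      · simpa using this.1
      · intro h'; exact this.2.2 (by rw [h'])
      · intro h'; exact this.2.1 (by rw [h', neg_neg])
    · right; left
      refine ⟨rfl, ?_⟩
      rw [hsg]; omega

/-- If a word contains `α^e β^e` at a turning point facing away from the origin, then the
corresponding element is absorbed by the diamond sitting at that turning point. -/
lemma absorb [CharZero 𝕜] (he : 4 ≤ e) (h0 : NoDesc n τ₀) {τ : ℕ → Fin 2}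
    (hs : SameShape n τ₀ τ) {c : ℕ} (hc : (c : ZMod e) = κ.1 - κ.2) (hc1 : 2 ≤ c) (hc2 : c + 2 ≤ e)
    {α β : Fin 2} (hβ : β ≠ α) {g : ℕ} (hn : g + 2 * e ≤ n)
    (ha : ∀ q, g < q → q ≤ g + e → τ q = α)
    (hb : ∀ q, g + e < q → q ≤ g + 2 * e → τ q = β)
    {q : ℤ} (hq : (α = 0 ∧ 0 ≤ q) ∨ (α = 1 ∧ q ≤ -1)) (hz : hgt τ g = c + e * q) :
    ∃ s : 𝕜, Vel 𝕜 κ n τ₀ τ = dia 𝕜 κ g e * (s • Vel 𝕜 κ n τ₀ τ) := by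
  obtain ⟨k, rfl⟩ : ∃ k, e = k + 1 := ⟨e - 1, by omega⟩
  have hm := move_top (𝕜 := 𝕜) (κ := κ) h0 hβ (by omega) hs hn ha hb fun d h1 _ =>
    Gd_wall hc hc1 hc2 hq hz (by push_cast; omega)
  have hw : κ.1 - κ.2 = (hgt τ g : ZMod (k + 1)) := by
    rw [hz, ← hc]; push_cast
    have : ((k + 1 : ℕ) : ZMod (k + 1)) = 0 := ZMod.natCast_self _
    push_cast at this
    rw [this]; ring
  have key := dia_absorb he rfl (Vel_wt (𝕜 := 𝕜) (κ := κ) h0 hm.1) (rs_blk2 (k := k) hβ hw) hn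
  rw [← hm.2] at key
  have h2 : ((2 * (-1 : ℤ) ^ k : ℤ) : 𝕜) ≠ 0 := by
    rw [Int.cast_ne_zero]
    exact mul_ne_zero two_ne_zero (pow_ne_zero _ (by norm_num))
  refine ⟨((2 * (-1 : ℤ) ^ k : ℤ) : 𝕜)⁻¹, ?_⟩
  rw [mul_smul_comm, key, ← Int.cast_smul_eq_zsmul 𝕜, smul_smul, inv_mul_cancel₀ h2, one_smul]

/-! ### Dominant words -/

/-- The column word of a tableau, extended by `0`. -/
def ext (t : StdTab n) (p : ℕ) : Fin 2 := if h : p - 1 < n ∧ 1 ≤ p then t ⟨p - 1, h.1⟩ else 0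

lemma tab_ext (t : StdTab n) : tab n (ext t) = t := by
  funext j
  unfold tab ext
  rw [dif_pos ⟨by simp, by omega⟩]
  congr 1

lemma ext_out (t : StdTab n) {p : ℕ} (h : ¬(1 ≤ p ∧ p ≤ n)) : ext t p = 0 := by
  unfold ext; rw [dif_neg (by omega)]

lemma ext_dom {a p : ℕ} (h1 : 1 ≤ p) (h2 : p ≤ n) : ext (domCol n a) p =
    if p ≤ 2 * min a (n - a) then (if p % 2 = 1 then 0 else 1)
    else (if n - a ≤ a then 0 else 1) := by
  unfold ext domCol
  rw [dif_pos ⟨by omega, h1⟩]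
  simp only [show p - 1 + 1 = p by omega]

lemma cnt_dom_even {a : ℕ} : ∀ k, k ≤ n → k ≤ 2 * min a (n - a) →
    cnt (ext (domCol n a)) 0 k = (k + 1) / 2 := by
  intro k
  induction k with
  | zero => intro _ _; rfl
  | succ k ih =>
    intro h1 h2
    rw [cnt, ih (by omega) (by omega), ext_dom (by omega) h1, if_pos h2]
    split_ifs <;> omega

lemma cnt_dom_tail {a : ℕ} : ∀ k, 2 * min a (n - a) + k ≤ n →
    cnt (ext (domCol n a)) 0 (2 * min a (n - a) + k) =
      min a (n - a) + if n - a ≤ a then k else 0 := by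
  intro k
  induction k with
  | zero => intro h; simp only [add_zero] at *; rw [cnt_dom_even _ h le_rfl]; split_ifs <;> omega
  | succ k ih =>
    intro h
    rw [← add_assoc, cnt, ih (by omega), ext_dom (by omega) (by omega),
      if_neg (show ¬ 2 * min a (n - a) + k + 1 ≤ 2 * min a (n - a) by omega)]
    split_ifs <;> omega

lemma cnt_dom {a : ℕ} (ha : a ≤ n) : cnt (ext (domCol n a)) 0 n = a := by
  have := cnt_dom_tail (n := n) (a := a) (n - 2 * min a (n - a)) (by omega)
  rw [show 2 * min a (n - a) + (n - 2 * min a (n - a)) = n by omega] at this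
  rw [this]
  split_ifs <;> omega

lemma noDesc_dom (a : ℕ) : NoDesc n (ext (domCol n a)) := by
  intro r h1 h2 hd
  obtain ⟨hne, hd⟩ := hd
  have hr : r ≤ 2 * min a (n - a) := by
    by_contra h
    apply hne
    rw [ext_dom h1 (by omega), ext_dom (by omega) (by omega), if_neg h,
      if_neg (show ¬ r + 1 ≤ 2 * min a (n - a) by omega)]
  have hh := cnt_add (ext (domCol n a)) (r - 1)
  have hc := cnt_dom_even (n := n) (a := a) (r - 1) (by omega) (by omega)
  unfold hgt at hd
  rw [ext_dom h1 (by omega), if_pos hr] at hd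
  split_ifs at hd with h3 <;> simp at hd <;> omega

lemma sameShape_dom {t : StdTab n} {x : ℤ} (h : cwt t = x) :
    SameShape n (ext (domOfWt n x)) (ext t) := by
  have h' : hgt (ext t) n = x := by rw [← h, ← cwt_tab, tab_ext]
  have h2 := cnt_add (ext t) n
  unfold hgt at h'
  refine ⟨?_, fun j hj => by rw [ext_out _ hj, ext_out _ hj]⟩
  unfold domOfWt
  rw [cnt_dom (by omega)]
  omega

end Blob

namespace Blob

/-! ### The weights `η_l` -/

lemma linked_iff {c e m : ℕ} {y : ℤ} :
    Linked c e (c + m * e) y ↔ ∃ z : ℤ, y = c + (m - 2 * z) * e := by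
  constructor
  · rintro ⟨g, hg, rfl⟩
    have key : (∀ x, (2 * e : ℤ) ∣ g x - x) ∨ (∀ x, (2 * e : ℤ) ∣ g x + x - 2 * c) := by
      unfold dihedralW at hg
      induction hg using Subgroup.closure_induction with
      | mem g hg =>
        obtain ⟨k, rfl⟩ := hg
        right
        intro x
        refine ⟨k, ?_⟩
        change 2 * ((c : ℤ) + k * (e : ℤ)) - x + x - 2 * c = _
        ring
      | one => left; intro x; simp
      | mul g h _ _ ig ih =>
        rcases ig with ig | ig <;> rcases ih with ih | ih
        · left; intro x
          obtain ⟨u, hu⟩ := ig (h x)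
          obtain ⟨v, hv⟩ := ih x
          exact ⟨u + v, by rw [Equiv.Perm.mul_apply]; linear_combination hu + hv⟩
        · right; intro x
          obtain ⟨u, hu⟩ := ig (h x)
          obtain ⟨v, hv⟩ := ih x
          exact ⟨u + v, by rw [Equiv.Perm.mul_apply]; linear_combination hu + hv⟩
        · right; intro x
          obtain ⟨u, hu⟩ := ig (h x)
          obtain ⟨v, hv⟩ := ih x
          exact ⟨u - v, by rw [Equiv.Perm.mul_apply]; linear_combination hu - hv⟩
        · left; intro x
          obtain ⟨u, hu⟩ := ig (h x)
          obtain ⟨v, hv⟩ := ih x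
          exact ⟨u - v, by rw [Equiv.Perm.mul_apply]; linear_combination hu - hv⟩
      | inv g _ ig =>
        have hg : ∀ x, g (g⁻¹ x) = x := fun x => g.apply_symm_apply x
        rcases ig with ig | ig
        · left; intro x
          obtain ⟨u, hu⟩ := ig (g⁻¹ x)
          rw [hg] at hu
          exact ⟨-u, by linear_combination -hu⟩
        · right; intro x
          obtain ⟨u, hu⟩ := ig (g⁻¹ x)
          rw [hg] at hu
          exact ⟨u, by linear_combination hu⟩
    rcases key with h | h
    · obtain ⟨z, hz⟩ := h (c + m * e)
      exact ⟨-z, by linear_combination hz⟩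
    · obtain ⟨z, hz⟩ := h (c + m * e)
      exact ⟨m - z, by linear_combination hz⟩
  · rintro ⟨z, rfl⟩
    refine ⟨reflWall c e (m - z), Subgroup.subset_closure ⟨_, rfl⟩, ?_⟩
    change 2 * ((c : ℤ) + (m - z) * (e : ℤ)) - (c + m * e) = _
    ring

/-- The index `z`, counted from the top, of `η_l` among the weights `c + (m - 2z)e`,
`0 ≤ z ≤ m`, linked to `η`. -/
def zIdx (m l : ℕ) : ℤ := if l = 0 then 0 else if l % 2 = 1 then ((l : ℤ) + 1) / 2 else m + 1 - (l : ℤ) / 2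

section
variable {c e m n : ℕ}

lemma wt_inj (he : 0 < e) {z z' : ℤ} (h : (c + (m - 2 * z) * e : ℤ) = c + (m - 2 * z') * e) :
    z = z' := by
  have : ((m : ℤ) - 2 * z) = m - 2 * z' :=
    mul_right_cancel₀ (b := (e : ℤ)) (by positivity) (by linarith)
  omega

lemma linked_range (hc : c < e) (hn : n = c + m * e) {z : ℤ} :
    (-(n : ℤ) ≤ c + (m - 2 * z) * e ∧ (c + (m - 2 * z) * e : ℤ) ≤ n) ↔ 0 ≤ z ∧ z ≤ m := by
  have he : (0 : ℤ) < e := by omega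
  have hn' : (n : ℤ) = c + m * e := by rw [hn]; push_cast; ring
  rw [hn']
  constructor
  · rintro ⟨h1, h2⟩
    constructor
    · by_contra h
      nlinarith
    · by_contra h
      have : (m : ℤ) + 1 - z ≤ 0 := by omega
      nlinarith
  · rintro ⟨h1, h2⟩
    constructor
    · nlinarith
    · nlinarith

lemma singList_spec (hc : c < e) (hn : n = c + m * e) (l : ℕ) (hl : l ≤ m) :
    (∀ z : ℤ, 0 ≤ z → z ≤ m → ((c + (m - 2 * z) * e : ℤ) ∈ singList c e n n l ↔
      z < 1 + ((l + 1) / 2 : ℕ) ∨ (m : ℤ) - (l / 2 : ℕ) < z)) ∧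
    etaWt c e n l = c + (m - 2 * zIdx m l) * e := by
  have he : (0 : ℤ) < e := by omega
  have hn' : (n : ℤ) = c + m * e := by rw [hn]; push_cast; ring
  induction l with
  | zero =>
    constructor
    · intro z h1 h2
      simp only [singList, List.mem_singleton, hn']
      constructor
      · intro h
        have : z = 0 := wt_inj (c := c) (m := m) (e := e) (by omega) (by rw [h]; ring)
        left; omega
      · intro h
        obtain rfl : z = 0 := by omega
        ring
    · simp [etaWt, singWt, singList, zIdx, hn']
  | succ l ih =>
    obtain ⟨ih, -⟩ := ih (by omega)
    have hS : {y : ℤ | Linked c e n y ∧ -(n : ℤ) ≤ y ∧ y ≤ (n : ℤ) ∧ y ∉ singList c e n n l} =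
        {y : ℤ | ∃ z : ℤ, y = c + (m - 2 * z) * e ∧ 1 + ((l + 1) / 2 : ℕ) ≤ z ∧
          z ≤ (m : ℤ) - (l / 2 : ℕ)} := by
      ext y
      simp only [Set.mem_ofPred_eq]
      constructor
      · rintro ⟨h1, h2, h3, h4⟩
        rw [hn', linked_iff] at h1
        obtain ⟨z, rfl⟩ := h1
        obtain ⟨h5, h6⟩ := (linked_range hc hn).1 ⟨h2, h3⟩
        rw [ih z h5 h6] at h4
        exact ⟨z, rfl, by omega, by omega⟩
      · rintro ⟨z, rfl, h1, h2⟩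
        have h3 := (linked_range (z := z) hc hn).2 ⟨by omega, by omega⟩
        refine ⟨by rw [hn', linked_iff]; exact ⟨z, rfl⟩, h3.1, h3.2, ?_⟩
        rw [ih z (by omega) (by omega)]
        omega
    have hx : (if l % 2 = 0 then sSup {y : ℤ | ∃ z : ℤ, y = c + (m - 2 * z) * e ∧
          1 + ((l + 1) / 2 : ℕ) ≤ z ∧ z ≤ (m : ℤ) - (l / 2 : ℕ)} else
        sInf {y : ℤ | ∃ z : ℤ, y = c + (m - 2 * z) * e ∧ 1 + ((l + 1) / 2 : ℕ) ≤ z ∧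
          z ≤ (m : ℤ) - (l / 2 : ℕ)}) = c + (m - 2 * zIdx m (l + 1)) * e := by
      split_ifs with h
      · apply IsGreatest.csSup_eq
        have hz : zIdx m (l + 1) = 1 + ((l + 1) / 2 : ℕ) := by
          unfold zIdx
          rw [if_neg (by omega), if_pos (by omega)]
          push_cast; omega
        refine ⟨⟨_, rfl, by omega, by omega⟩, ?_⟩
        rintro y ⟨z, rfl, h1, h2⟩
        have : (zIdx m (l + 1)) ≤ z := by omega
        nlinarith
      · apply IsLeast.csInf_eq
        have hz : zIdx m (l + 1) = (m : ℤ) - (l / 2 : ℕ) := by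
          unfold zIdx
          rw [if_neg (by omega), if_neg (by omega)]
          push_cast; omega
        refine ⟨⟨_, rfl, by omega, by omega⟩, ?_⟩
        rintro y ⟨z, rfl, h1, h2⟩
        have : z ≤ (zIdx m (l + 1)) := by omega
        nlinarith
    have hL : singList c e n n (l + 1) =
        singList c e n n l ++ [(c + (m - 2 * zIdx m (l + 1)) * e : ℤ)] := by
      rw [singList, if_pos (by positivity), hS, hx]
    constructor
    · intro z h1 h2
      rw [hL, List.mem_append, List.mem_singleton, ih z h1 h2]
      have : (c + (m - 2 * z) * e : ℤ) = c + (m - 2 * zIdx m (l + 1)) * e ↔ z = zIdx m (l + 1) :=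
        ⟨fun h => wt_inj (by omega) h, fun h => by rw [h]⟩
      rw [this]
      unfold zIdx
      rw [if_neg (by omega)]
      push_cast
      split_ifs with h <;> omega
    · unfold etaWt singWt
      rw [hL]; simp

end

/-! ### The block structure of tableaux with residue sequence `i^η` -/

/-- A lattice path `Q` on the walls starting at `0` (the upper wall of the fundamental alcove) all
of whose turning points lie on the boundary of the fundamental alcove and face the alcove crosses
the alcove `N` times and then moves straight away from it. -/
lemma zigzag (b : ℕ → Fin 2) (Q : ℕ → ℤ) (hQ0 : Q 0 = 0) (hQ : ∀ i, Q (i + 1) = Q i + sg (b i))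
    (m : ℕ) (h : ∀ i, i + 1 < m → ¬ (b (i + 1) ≠ b i ∧
      ((b i = 0 ∧ 0 ≤ Q i) ∨ (b i = 1 ∧ Q i ≤ -1)))) :
    ∃ N ≤ m, (∀ i ≤ N, Q i = -((i % 2 : ℕ) : ℤ)) ∧
      ((N % 2 = 0 ∧ Q m = m - N ∧ (N < m → b (m - 1) = 0)) ∨
       (N % 2 = 1 ∧ Q m = -1 - ((m : ℤ) - N) ∧ (N < m → b (m - 1) = 1))) := by
  have s0 : sg 0 = 1 := by simp [sg]
  have s1 : sg 1 = -1 := by simp [sg]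
  induction m with
  | zero =>
    refine ⟨0, le_rfl, fun i hi => ?_, Or.inl ⟨rfl, ?_, by omega⟩⟩
    · obtain rfl : i = 0 := by omega
      simpa using hQ0
    · simpa using hQ0
  | succ m ih =>
    obtain ⟨N, hN, hz, hcase⟩ := ih fun i hi => h i (by omega)
    have hQm := hQ m
    rcases Nat.lt_or_ge N m with hlt | hge
    · have hp := h (m - 1) (by omega)
      have hQm1 := hQ (m - 1)
      rw [show m - 1 + 1 = m by omega] at hp hQm1
      rcases hcase with ⟨h1, h2, h3⟩ | ⟨h1, h2, h3⟩
      · have hb := h3 hlt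
        rw [hb, s0] at hQm1
        have hbm : b m = 0 := by
          by_contra hne
          exact hp ⟨by rw [hb]; exact hne, Or.inl ⟨hb, by omega⟩⟩
        rw [hbm, s0] at hQm
        exact ⟨N, by omega, hz, Or.inl ⟨h1, by push_cast; omega, fun _ => by simpa using hbm⟩⟩
      · have hb := h3 hlt
        rw [hb, s1] at hQm1
        have hbm : b m = 1 := by
          by_contra hne
          exact hp ⟨by rw [hb]; exact hne, Or.inr ⟨hb, by omega⟩⟩
        rw [hbm, s1] at hQm
        exact ⟨N, by omega, hz, Or.inr ⟨h1, by push_cast; omega, fun _ => by simpa using hbm⟩⟩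
    · obtain rfl : N = m := by omega
      have hzN := hz N le_rfl
      have hext : Q (N + 1) = -(((N + 1) % 2 : ℕ) : ℤ) →
          ∀ i ≤ N + 1, Q i = -((i % 2 : ℕ) : ℤ) := fun hx i hi => by
        rcases Nat.lt_or_ge N i with h4 | h4
        · obtain rfl : i = N + 1 := by omega
          exact hx
        · exact hz i h4
      rcases hcase with ⟨h1, h2, -⟩ | ⟨h1, h2, -⟩ <;> rcases fin2 (b N) with hb | hb
      · rw [hb, s0] at hQm
        exact ⟨N, by omega, hz, Or.inl ⟨h1, by push_cast; omega, fun _ => by simpa using hb⟩⟩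
      · rw [hb, s1] at hQm
        exact ⟨N + 1, le_rfl, hext (by omega),
          Or.inr ⟨by omega, by push_cast; omega, fun h => by omega⟩⟩
      · rw [hb, s0] at hQm
        exact ⟨N + 1, le_rfl, hext (by omega),
          Or.inl ⟨by omega, by push_cast; omega, fun h => by omega⟩⟩
      · rw [hb, s1] at hQm
        exact ⟨N, by omega, hz, Or.inr ⟨h1, by push_cast; omega, fun _ => by simpa using hb⟩⟩

end Blob

namespace Blob

section
variable {n e : ℕ} {κ : ZMod e × ZMod e}

lemma cWall_spec (he : 4 ≤ e) (hκ : AdjFree κ) :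
    2 ≤ cWall e κ ∧ cWall e κ + 2 ≤ e ∧ ((cWall e κ : ℕ) : ZMod e) = κ.1 - κ.2 := by
  have : NeZero e := ⟨by omega⟩
  obtain ⟨h0, h1, h2⟩ := hκ
  have hv := ZMod.natCast_zmod_val (κ.1 - κ.2)
  have hlt := ZMod.val_lt (κ.1 - κ.2)
  generalize hx : (κ.1 - κ.2).val = x at hv hlt
  have g0 : x ≠ 0 := by
    rintro rfl
    apply h0; push_cast at hv; linear_combination -hv
  have hc : cWall e κ = x := by unfold cWall; rw [hx, if_neg g0]
  have g1 : x ≠ 1 := by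
    rintro rfl
    apply h1; push_cast at hv; linear_combination -hv
  have g2 : x + 1 ≠ e := by
    intro h
    apply h2
    have : ((x + 1 : ℕ) : ZMod e) = 0 := by rw [h]; exact ZMod.natCast_self e
    push_cast at this
    linear_combination this - hv
  rw [hc]
  exact ⟨by omega, by omega, hv⟩

/-- The residue sequence of `η = (1ⁿ, ∅)`. -/
lemma rs_eta {p : ℕ} (h1 : 1 ≤ p) (h2 : p ≤ n) :
    rs κ (ext (domCol n n)) p = κ.1 - ((p - 1 : ℕ) : ZMod e) := by
  have hz : ∀ q, 0 < q → q ≤ 0 + n → ext (domCol n n) q = 0 := fun q h3 h4 => by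
    rw [ext_dom (by omega) (by omega)]
    simp; omega
  have hc := cnt_run (τ := ext (domCol n n)) 0 (p - 1) fun q h3 h4 => hz q h3 (by omega)
  unfold rs pos
  rw [hz p (by omega) (by omega)]
  simp only [zero_add] at hc
  rw [hc]
  simp [kk, cnt]

/-- A letter of a word with residue sequence `i^η` is constrained by the column lengths. -/
lemma letter_cond {τ : ℕ → Fin 2} {p : ℕ} (h : rs κ τ (p + 1) = κ.1 - (p : ZMod e)) :
    (τ (p + 1) = 0 → (cnt τ 1 p : ZMod e) = 0) ∧
    (τ (p + 1) = 1 → (cnt τ 0 p : ZMod e) = κ.1 - κ.2) := by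
  have ha : (p : ZMod e) = cnt τ 0 p + cnt τ 1 p := by exact_mod_cast (congrArg (Nat.cast (R := ZMod e)) (cnt_add τ p)).symm
  rw [ha] at h
  unfold rs pos at h
  rw [Nat.add_sub_cancel] at h
  constructor
  · intro h0
    rw [h0] at h
    simp only [kk, if_true] at h
    linear_combination h
  · intro h1
    rw [h1] at h
    have : kk κ 1 = κ.2 := by simp [kk]
    rw [this] at h
    linear_combination h

variable {c m : ℕ} {τ : ℕ → Fin 2}

/-- The first `c` letters are `0`. -/
lemma init_zero (hc : (c : ZMod e) = κ.1 - κ.2) (hce : c < e) (hcn : c ≤ n)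
    (hr : ∀ p, p < n → rs κ τ (p + 1) = κ.1 - (p : ZMod e)) :
    ∀ q, 0 < q → q ≤ 0 + c → τ q = 0 := by
  intro q
  induction q using Nat.strong_induction_on with
  | _ q ih =>
    intro h1 h2
    obtain ⟨p, rfl⟩ : ∃ p, q = p + 1 := ⟨q - 1, by omega⟩
    have hcnt := cnt_run (τ := τ) (a := 0) 0 p fun q h3 h4 => ih q (by omega) h3 (by omega)
    rcases fin2 (τ (p + 1)) with h | h
    · exact h
    · exfalso
      have := (letter_cond (hr p (by omega))).2 h
      rw [zero_add] at hcnt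
      rw [hcnt, ← hc] at this
      simp only [cnt, zero_add] at this
      refine intCast_ne (e := e) (d := c) (x := p) (by omega) (by omega) ?_
      push_cast; exact this.symm

/-- After the initial run the word consists of blocks of `e` equal letters. -/
lemma blocks (hc : (c : ZMod e) = κ.1 - κ.2) (hce : c < e) (hn : n = c + m * e)
    (hr : ∀ p, p < n → rs κ τ (p + 1) = κ.1 - (p : ZMod e)) (i : ℕ) (hi : i ≤ m) :
    ((cnt τ 0 (c + i * e) : ZMod e) = κ.1 - κ.2 ∧ (cnt τ 1 (c + i * e) : ZMod e) = 0) ∧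
    (i < m → ∀ q, c + i * e < q → q ≤ c + i * e + e → τ q = τ (c + i * e + 1)) := by
  have he0 : ((e : ℕ) : ZMod e) = 0 := ZMod.natCast_self e
  have hne : ∀ x : ℕ, 0 < x → x < e → (x : ZMod e) ≠ 0 := fun x h1 h2 => by
    simpa using intCast_ne (e := e) (d := x) (x := 0) (by omega) (by omega)
  have hrun : ∀ i, i < m →
      ((cnt τ 0 (c + i * e) : ZMod e) = κ.1 - κ.2 ∧ (cnt τ 1 (c + i * e) : ZMod e) = 0) →
      ∀ q, c + i * e < q → q ≤ c + i * e + e → τ q = τ (c + i * e + 1) := by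
    intro i hi hinv q
    have hb : c + i * e + e ≤ n := by
      rw [hn]; nlinarith [Nat.mul_le_mul_right e (Nat.succ_le_of_lt hi)]
    induction q using Nat.strong_induction_on with
    | _ q ih =>
      intro h1 h2
      obtain ⟨x, rfl⟩ : ∃ x, q = c + i * e + x + 1 := ⟨q - (c + i * e) - 1, by omega⟩
      rcases Nat.eq_zero_or_pos x with rfl | hx
      · rfl
      have hcond := letter_cond (hr (c + i * e + x) (by omega))
      by_contra hcon
      rcases fin2 (τ (c + i * e + 1)) with hβ | hβ
      · have h3 := hcond.2 (by rcases fin2 (τ (c + i * e + x + 1)) with h | h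
                               · rw [hβ] at hcon; exact absurd h hcon
                               · exact h)
        rw [cnt_run (a := 0) _ x fun q h3 h4 => by rw [ih q (by omega) h3 (by omega), hβ]] at h3
        push_cast at h3
        rw [hinv.1] at h3
        exact hne x hx (by omega) (by linear_combination h3)
      · have h3 := hcond.1 (by rcases fin2 (τ (c + i * e + x + 1)) with h | h
                               · exact h
                               · rw [hβ] at hcon; exact absurd h hcon)
        rw [cnt_run (a := 1) _ x fun q h3 h4 => by rw [ih q (by omega) h3 (by omega), hβ]] at h3
        push_cast at h3
        rw [hinv.2] at h3
        exact hne x hx (by omega) (by linear_combination h3)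
  have hcn : c ≤ n := by rw [hn]; omega
  have hinv : ((cnt τ 0 (c + i * e) : ZMod e) = κ.1 - κ.2 ∧ (cnt τ 1 (c + i * e) : ZMod e) = 0) := by
    induction i with
    | zero =>
      have hz := init_zero hc hce hcn hr
      have h1 := cnt_run (τ := τ) 0 c hz
      have h2 := cnt_run_ne (τ := τ) (a := 1) (by decide) 0 c hz
      simp only [zero_add] at h1 h2
      rw [zero_mul, add_zero, h1, h2]
      simp [cnt, hc]
    | succ i ih =>
      have h := ih (by omega)
      have hrun := hrun i (by omega) h
      rw [show c + (i + 1) * e = c + i * e + e by ring]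
      rcases fin2 (τ (c + i * e + 1)) with hβ | hβ
      · rw [hβ] at hrun
        rw [cnt_run _ e hrun, cnt_run_ne (by decide) _ e hrun]
        push_cast
        rw [he0, add_zero]; exact h
      · rw [hβ] at hrun
        rw [cnt_run _ e hrun, cnt_run_ne (by decide) _ e hrun]
        push_cast
        rw [he0, add_zero]; exact h
  exact ⟨hinv, fun hi => hrun i hi hinv⟩

/-- The number of the wall reached after `i` blocks. -/
def wallNo (b : ℕ → Fin 2) : ℕ → ℤ
  | 0 => 0
  | i + 1 => wallNo b i + sg (b i)

/-- The heights of the path of a tableau with residue sequence `i^η` at the times `c + ie`. -/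
lemma hgt_blocks (hc : (c : ZMod e) = κ.1 - κ.2) (hce : c < e) (hn : n = c + m * e)
    (hr : ∀ p, p < n → rs κ τ (p + 1) = κ.1 - (p : ZMod e)) (i : ℕ) (hi : i ≤ m) :
    hgt τ (c + i * e) = c + e * wallNo (fun i => τ (c + i * e + 1)) i := by
  induction i with
  | zero =>
    have h := hgt_run (τ := τ) 0 c (init_zero hc hce (by rw [hn]; omega) hr)
    simp only [zero_add] at h
    rw [zero_mul, add_zero, h]
    simp [hgt_zero, sg, wallNo]
  | succ i ih =>
    rw [show c + (i + 1) * e = c + i * e + e by ring,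
      hgt_run _ e ((blocks hc hce hn hr i (by omega)).2 (by omega)), ih (by omega), wallNo]
    ring

/-- Zigzagging through the fundamental alcove contributes to the degree. -/
lemma le_wNum (hc : (c : ZMod e) = κ.1 - κ.2) (hce : c < e) (hn : n = c + m * e)
    (hr : ∀ p, p < n → rs κ τ (p + 1) = κ.1 - (p : ZMod e)) {N : ℕ} (hN : N ≤ m)
    (hz : ∀ i ≤ N, wallNo (fun i => τ (c + i * e + 1)) i = -((i % 2 : ℕ) : ℤ)) :
    N ≤ wNum c e (tab n τ) := by
  have hfin : {j : ℕ | CrossesFundAt c e (tab n τ) j}.Finite :=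
    (Set.finite_Iic n).subset fun j hj => by
      have := hj.1.1
      simp only [Set.mem_Iic]; omega
  have hinj : Set.InjOn (fun i : ℕ => c + i * e) (Set.Iio N) := fun i _ j _ h => by
    have : i * e = j * e := by simpa using h
    exact Nat.eq_of_mul_eq_mul_right (by omega) this
  have hsub : (fun i : ℕ => c + i * e) '' Set.Iio N ⊆ {j : ℕ | CrossesFundAt c e (tab n τ) j} := by
    rintro _ ⟨i, hi, rfl⟩
    have hi : i < N := hi
    have hb : c + i * e + e ≤ n := by
      rw [hn]; nlinarith [Nat.mul_le_mul_right e (show i + 1 ≤ m by omega)]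
    have hrun := (blocks hc hce hn hr i (by omega)).2 (by omega)
    have h1 := hgt_blocks hc hce hn hr i (by omega)
    have h2 := hgt_blocks hc hce hn hr (i + 1) (by omega)
    rw [show c + (i + 1) * e = c + i * e + e by ring] at h2
    rw [hz i (by omega)] at h1
    rw [hz (i + 1) (by omega)] at h2
    have hp : ∀ a, a < e → pathOf (tab n τ) (c + i * e + a + 1) =
        pathOf (tab n τ) (c + i * e + a) + sg (τ (c + i * e + 1)) := fun a ha => by
      rw [pathOf_tab _ (by omega), pathOf_tab _ (by omega), hgt_succ,
        hrun _ (by omega) (by omega)]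
    refine ⟨⟨hb, ⟨-((i % 2 : ℕ) : ℤ), ?_⟩, ?_⟩, ?_⟩
    · simp only []
      rw [pathOf_tab _ (by omega), h1]; ring
    · rcases fin2 (τ (c + i * e + 1)) with hβ | hβ
      · left; intro a ha; rw [hp a ha, hβ]; rfl
      · right; intro a ha; rw [hp a ha, hβ]; rfl
    · simp only []
      rw [pathOf_tab _ (by omega), pathOf_tab _ hb, h1, h2]
      rcases Nat.mod_two_eq_zero_or_one i with h | h
      · left
        rw [h, show (i + 1) % 2 = 1 by omega]; simp; ring
      · right
        rw [h, show (i + 1) % 2 = 0 by omega]; simp; ring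
  have := Set.ncard_le_ncard hsub hfin
  rw [hinj.ncard_image] at this
  unfold wNum
  refine le_trans (le_of_eq ?_) this
  rw [← Finset.coe_Iio, Set.ncard_coe_finset]; simp

end

end Blob

namespace Blob

/-! ### Existence of a turning point facing away from the origin -/

section
variable {n e : ℕ} {κ : ZMod e × ZMod e}

lemma domOfWt_self (n : ℕ) : domOfWt n (n : ℤ) = domCol n n := by
  unfold domOfWt
  congr 1
  omega

/-- The residue sequence of a tableau in `Std_η(μ)`, in terms of its column word. -/
lemma rs_of_mem {t : StdTab n} (h : resOf κ t = resOf κ (domOfWt n (n : ℤ))) :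
    ∀ p, p < n → rs κ (ext t) (p + 1) = κ.1 - (p : ZMod e) := by
  intro p hp
  rw [domOfWt_self, ← tab_ext t, ← tab_ext (domCol n n), resOf_tab, resOf_tab] at h
  have := congrFun h ⟨p, hp⟩
  simp only [seqOf] at this
  rw [this, rs_eta (by omega) (by omega), Nat.add_sub_cancel]

/-- A tableau of shape `η_l` of degree less than `l - 1` has a turning point facing away from the
origin: otherwise it zigzags at least `l - 1` times through the fundamental alcove. -/
lemma exists_peak {c m l : ℕ} (hc : (c : ZMod e) = κ.1 - κ.2) (hce : c < e) (hn : n = c + m * e)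
    (hl : 1 ≤ l) (hlm : l ≤ m) {t : StdTab n} (hw : cwt t = etaWt c e n l)
    (hr : ∀ p, p < n → rs κ (ext t) (p + 1) = κ.1 - (p : ZMod e))
    (hdeg : wNum c e t + 1 < l) :
    ∃ i, i + 1 < m ∧ ext t (c + (i + 1) * e + 1) ≠ ext t (c + i * e + 1) ∧
      ((ext t (c + i * e + 1) = 0 ∧ 0 ≤ wallNo (fun i => ext t (c + i * e + 1)) i) ∨
       (ext t (c + i * e + 1) = 1 ∧ wallNo (fun i => ext t (c + i * e + 1)) i ≤ -1)) := by
  by_contra hno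
  obtain ⟨N, hN, hz, hQ⟩ := zigzag (fun i => ext t (c + i * e + 1))
    (wallNo fun i => ext t (c + i * e + 1)) rfl (fun i => rfl) m
    (fun i hi hp => hno ⟨i, hi, hp⟩)
  have hle := le_wNum hc hce hn hr hN hz
  rw [tab_ext] at hle
  have hm := hgt_blocks hc hce hn hr m le_rfl
  rw [← hn, ← cwt_tab, tab_ext, hw, (singList_spec hce hn l hlm).2] at hm
  have hQm : wallNo (fun i => ext t (c + i * e + 1)) m = m - 2 * zIdx m l :=
    mul_left_cancel₀ (a := (e : ℤ)) (by omega) (by linarith)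
  unfold zIdx at hQm
  rw [if_neg (by omega)] at hQm
  rcases hQ with ⟨h1, h2, -⟩ | ⟨h1, h2, -⟩ <;> rw [h2] at hQm <;> split_ifs at hQm <;> omega

end

/-- The diamond `U^η_j` absorbs the idempotent, on elements of weight `i^η`. -/
lemma Ueta_mul {𝕜 : Type} [Field 𝕜] {n e : ℕ} {κ : ZMod e × ZMod e} (he : 1 ≤ e) (i : ℕ)
    {v : BA 𝕜 n e κ} (hv : bE 𝕜 κ (etaRes κ n 0) * v = v) :
    Ueta 𝕜 κ n (i + 1) * v = dia 𝕜 κ (cWall e κ + i * e) e * v := by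
  obtain ⟨k, rfl⟩ : ∃ k, e = k + 1 := ⟨e - 1, by omega⟩
  rw [← layered_eq_dia, Ueta, diamondAt, mul_assoc, hv,
    show cWall (k + 1) κ + i * (k + 1) + (k + 1) = cWall (k + 1) κ + (i + 1) * (k + 1) by ring]
  rfl

end Blob
namespace Blob

/-- (char `k = 0`, setting of `η`, `m ≥ 1`.)  Let
`1 ≤ k' < l ≤ min(2k', m)` and let `t ∈ Std_η(η_l)` with `deg t = 2k' - l`.
Then, for a suitable choice of reduced expressions, `ψ_{t, t^{η_l}_η}`
lies in the left ideal `U^η_j · B_n^κ` for some index `j`. -/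
theorem statement10 (𝕜 : Type) [Field 𝕜] [CharZero 𝕜] (n e : ℕ) (hn : 1 ≤ n)
    (he : 4 ≤ e) (κ : ZMod e × ZMod e) (hκ : AdjFree κ)
    (m : ℕ) (hm : 1 ≤ m) (hne : n = cWall e κ + m * e)
    (k' l : ℕ) (hk1 : 1 ≤ k') (hk2 : k' < l) (hl1 : l ≤ 2 * k') (hl2 : l ≤ m)
    (t : StdTab n)
    (ht : MemStd κ (etaWt (cWall e κ) e n 0) (etaWt (cWall e κ) e n l) t)
    (hdeg : degTab (cWall e κ) e t = 2 * k' - l)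
    (tmax : StdTab n)
    (htmax : IsMaxTab κ (etaWt (cWall e κ) e n 0) (etaWt (cWall e κ) e n l) tmax) :
    ∃ w wmax : List ℕ,
      IsRedWordForTab (domOfWt n (etaWt (cWall e κ) e n l)) t w ∧
      IsRedWordForTab (domOfWt n (etaWt (cWall e κ) e n l)) tmax wmax ∧
      ∃ j : ℕ, 1 ≤ j ∧ j + 1 ≤ m ∧
        ∃ b : BA 𝕜 n e κ,
          cellElt 𝕜 κ w wmax (etaRes κ n l) = Ueta 𝕜 κ n j * b := by
  obtain ⟨hc1, hc2, hc⟩ := cWall_spec he hκ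
  have hce : cWall e κ < e := by omega
  have heta : etaWt (cWall e κ) e n 0 = n := by
    rw [(singList_spec hce hne 0 (by omega)).2, hne]
    simp [zIdx]
  have hres := ht.2
  rw [heta] at hres
  have hr := rs_of_mem hres
  have h0 : NoDesc n (ext (domOfWt n (etaWt (cWall e κ) e n l))) := noDesc_dom _
  have hs := sameShape_dom ht.1
  obtain ⟨w, hw⟩ := h0.exists_red hs
  obtain ⟨wmax, hwmax⟩ := h0.exists_red (sameShape_dom htmax.1.1)
  have iw := hw.isRedWord
  have iwmax := hwmax.isRedWord
  rw [tab_ext, tab_ext] at iw iwmax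
  refine ⟨w, wmax, iw, iwmax, ?_⟩
  -- the degree `2k' - l` is too small for a tableau without such a turning point
  obtain ⟨i, hi, hβ, hq⟩ := exists_peak hc hce hne (by omega) hl2 ht.1 hr
    (by unfold degTab at hdeg; omega)
  have hin : cWall e κ + i * e + 2 * e ≤ n := by
    rw [hne]; nlinarith [Nat.mul_le_mul_right e (show i + 2 ≤ m by omega)]
  have hblock := (blocks hc hce hne hr (i + 1) (by omega)).2 (by omega)
  have hshift : cWall e κ + (i + 1) * e = cWall e κ + i * e + e := by ring
  obtain ⟨s, hV⟩ := absorb (𝕜 := 𝕜) he h0 hs hc hc1 hc2 hβ hin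
    ((blocks hc hce hne hr i (by omega)).2 (by omega))
    (fun q h1 h2 => hblock q (by omega) (by omega)) hq (hgt_blocks hc hce hne hr i (by omega))
  have hwt : bE 𝕜 κ (etaRes κ n 0) * Vel 𝕜 κ n (ext (domOfWt n (etaWt (cWall e κ) e n l))) (ext t) =
      Vel 𝕜 κ n (ext (domOfWt n (etaWt (cWall e κ) e n l))) (ext t) := by
    have := Vel_wt (𝕜 := 𝕜) (κ := κ) h0 hs
    unfold Wt at this
    rwa [← resOf_tab, tab_ext, ht.2] at this
  refine ⟨i + 1, by omega, by omega,
    (s • Vel 𝕜 κ n (ext (domOfWt n (etaWt (cWall e κ) e n l))) (ext t)) *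
      psiWord 𝕜 κ wmax.reverse, ?_⟩
  rw [← mul_assoc, Ueta_mul (by omega) i (by rw [mul_smul_comm, hwt]), ← hV, Vel_eq h0 hw,
    ← resOf_tab, tab_ext]
  rfl

end Blob
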